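/- Let F ∈ ℂ[x,y,s,t] be an irreducible polynomial of total degree δ such that none of F_x, F_y, F_s, F_t is identically zero. Then either F has the special sum form, or there is a permutation σ among σ₁ = (x,y,s,t), σ₂ = (s,y,x,t), σ₃ = (t,y,s,x) such that, for the polynomial F_σ and its associated sets 𝒯_σ, 𝒮_σ and curves, both of the following hold (with an absolute constant in the O-notation): (a) there exists a one-dimensional algebraic variety 𝒯' ⊂ ℂ² of degree O(δ⁴) containing 𝒯_σ such that for every (s,t) ∈ ℂ²\𝒯' the curve γ_{s,t} does not contain a popular curve; (b) there exists a one-dimensional algebraic variety 𝒮' ⊂ ℂ² of degree O(δ⁴) containing 𝒮_σ such that for every (x,y) ∈ ℂ²\𝒮' the dual curve γ*_{x,y} does not contain a popular dual curve. -/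

import Mathlib

open MvPolynomial

noncomputable section

def ev4 (F : MvPolynomial (Fin 4) ℂ) (x y s t : ℂ) : ℂ := eval ![x, y, s, t] F

def ev2 (g : MvPolynomial (Fin 2) ℂ) (p : ℂ × ℂ) : ℂ := eval ![p.1, p.2] g

def curveOf (F : MvPolynomial (Fin 4) ℂ) (c d : ℂ) : Set (ℂ × ℂ) :=
  {p : ℂ × ℂ | ev4 F p.1 p.2 c d = 0}

def dualCurveOf (F : MvPolynomial (Fin 4) ℂ) (a b : ℂ) : Set (ℂ × ℂ) :=
  {q : ℂ × ℂ | ev4 F a b q.1 q.2 = 0}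

def TT (F : MvPolynomial (Fin 4) ℂ) : Set (ℂ × ℂ) :=
  {q : ℂ × ℂ | ∀ x y : ℂ, ev4 F x y q.1 q.2 = 0}

def SS (F : MvPolynomial (Fin 4) ℂ) : Set (ℂ × ℂ) :=
  {p : ℂ × ℂ | ∀ s t : ℂ, ev4 F p.1 p.2 s t = 0}

def IsIrredCurve (γ : Set (ℂ × ℂ)) : Prop :=
  ∃ g : MvPolynomial (Fin 2) ℂ, Irreducible g ∧ γ = {p : ℂ × ℂ | ev2 g p = 0}

def IsPopular (F : MvPolynomial (Fin 4) ℂ) (δ : ℕ) (γ : Set (ℂ × ℂ)) : Prop :=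
  IsIrredCurve γ ∧ ∃ P : Finset (ℂ × ℂ), δ ^ 2 + 1 ≤ P.card ∧
    ∀ q ∈ P, q ∉ TT F ∧ γ ⊆ curveOf F q.1 q.2

def IsPopularDual (F : MvPolynomial (Fin 4) ℂ) (δ : ℕ) (γ : Set (ℂ × ℂ)) : Prop :=
  IsIrredCurve γ ∧ ∃ P : Finset (ℂ × ℂ), δ ^ 2 + 1 ≤ P.card ∧
    ∀ p ∈ P, p ∉ SS F ∧ γ ⊆ dualCurveOf F p.1 p.2

def zeroSetOf {n : ℕ} (I : Set (MvPolynomial (Fin n) ℂ)) : Set (Fin n → ℂ) :=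
  {p | ∀ f ∈ I, eval p f = 0}

def IsAlgSet {n : ℕ} (S : Set (Fin n → ℂ)) : Prop :=
  ∃ I : Set (MvPolynomial (Fin n) ℂ), S = zeroSetOf I

def IsIrredAlgSet {n : ℕ} (S : Set (Fin n → ℂ)) : Prop :=
  IsAlgSet S ∧ S.Nonempty ∧
    ∀ S₁ S₂ : Set (Fin n → ℂ), IsAlgSet S₁ → IsAlgSet S₂ → S = S₁ ∪ S₂ → S = S₁ ∨ S = S₂

def algDimLE {n : ℕ} (S : Set (Fin n → ℂ)) (d : ℕ) : Prop :=
  ∀ Z : Fin (d + 2) → Set (Fin n → ℂ),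
    (∀ i, IsIrredAlgSet (Z i) ∧ Z i ⊆ S) → ¬ StrictMono Z

def SpecialSumForm (F : MvPolynomial (Fin 4) ℂ) : Prop :=
  ∃ Z₀ : Set (Fin 4 → ℂ), IsAlgSet Z₀ ∧ Z₀ ⊆ {v | eval v F = 0} ∧ algDimLE Z₀ 2 ∧
    ∀ v : Fin 4 → ℂ, eval v F = 0 → v ∉ Z₀ →
      ∃ (D : Fin 4 → Set ℂ) (φ ψ : Fin 4 → ℂ → ℂ),
        (∀ i, IsOpen (D i) ∧ v i ∈ D i ∧ Set.InjOn (φ i) (D i) ∧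
          ∀ z ∈ D i, AnalyticAt ℂ (φ i) z ∧ AnalyticAt ℂ (ψ i) (φ i z) ∧ ψ i (φ i z) = z) ∧
        ∀ x y s t : ℂ, x ∈ D 0 → y ∈ D 1 → s ∈ D 2 → t ∈ D 3 →
          (eval ![x, y, s, t] F = 0 ↔ φ 0 x + φ 1 y + φ 2 s + φ 3 t = 0)

/-- Properties (a) and (b) of Proposition 2.7 for a given polynomial `G` (the renamed `F_σ`):
(a) a one-dimensional variety `𝒯'` (a curve of degree ≤ c·δ⁴ together with at most c·δ⁴
isolated points) contains `𝒯` and for `(s,t)` outside it the curve `γ_{s,t}` contains no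
popular curve; (b) the dual statement. -/
def GoodSplit (c : ℝ) (δ : ℕ) (G : MvPolynomial (Fin 4) ℂ) : Prop :=
  (∃ (g : MvPolynomial (Fin 2) ℂ) (P : Finset (ℂ × ℂ)), g ≠ 0 ∧
    (g.totalDegree : ℝ) ≤ c * (δ : ℝ) ^ 4 ∧ (P.card : ℝ) ≤ c * (δ : ℝ) ^ 4 ∧
    TT G ⊆ {p : ℂ × ℂ | ev2 g p = 0} ∪ ↑P ∧
    ∀ q : ℂ × ℂ, q ∉ ({p : ℂ × ℂ | ev2 g p = 0} ∪ ↑P : Set (ℂ × ℂ)) →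
      ¬ ∃ γ : Set (ℂ × ℂ), IsPopular G δ γ ∧ γ ⊆ curveOf G q.1 q.2) ∧
  (∃ (g : MvPolynomial (Fin 2) ℂ) (P : Finset (ℂ × ℂ)), g ≠ 0 ∧
    (g.totalDegree : ℝ) ≤ c * (δ : ℝ) ^ 4 ∧ (P.card : ℝ) ≤ c * (δ : ℝ) ^ 4 ∧
    SS G ⊆ {p : ℂ × ℂ | ev2 g p = 0} ∪ ↑P ∧
    ∀ p : ℂ × ℂ, p ∉ ({p' : ℂ × ℂ | ev2 g p' = 0} ∪ ↑P : Set (ℂ × ℂ)) →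
      ¬ ∃ γ : Set (ℂ × ℂ), IsPopularDual G δ γ ∧ γ ⊆ dualCurveOf G p.1 p.2)

/-! For a splitting of the variables into `{i, j}` and `{k, l}` consider whether, on `F = 0`, the
ratio `Fᵢ / Fⱼ` is locally a function of the coordinates `i` and `j` alone. The obstruction is a
polynomial of degree at most `3δ`, built from the first and second derivatives of `F`.

If a curve `γ` is popular, the polynomials `F (p, ·)` with `p ∈ γ` have degree at most `δ` and more
than `δ ^ 2` common zeros, so by Bézout they share an irreducible factor `f`, and `F` vanishes on
`γ × {f = 0}`. On such a product the obstruction vanishes. If `F` does not divide it, eliminating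
the last two variables from `F` and the obstruction leaves a plane curve of degree `O(δ ^ 2)` which
contains `γ`. So there are `O(δ ^ 2)` popular curves, and for each of them the parameters `q` with
`γ ⊆ γ_q` lie on a curve of degree at most `δ`.

If `F` divides the obstructions for all three splittings, every ratio `Fᵢ / Fⱼ` depends only on the
coordinates `i` and `j`. Since there are at least four coordinates, fixing a third one separates
the ratio as `αᵢ / αⱼ` with `αₘ` a function of the coordinate `m`, and the primitives `φₘ` of `αₘ`
satisfy `∑ φₘ = 0` exactly on `F = 0`.
-/

open scoped Topology

section PlaneBezout

theorem finrank_restrictTotalDegree (σ R : Type*) [Fintype σ] [CommRing R] [Nontrivial R] (d : ℕ) :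
    Module.finrank R (restrictTotalDegree σ R d) =
      (d + Fintype.card σ).choose (Fintype.card σ) := by
  classical
  have hdisj : (Finset.range (d + 1) : Set ℕ).PairwiseDisjoint
      (Finset.finsuppAntidiag (Finset.univ : Finset σ)) :=
    fun j _ k _ hjk => Finset.disjoint_left.2 fun n hj hk => hjk <|
      (Finset.mem_finsuppAntidiag.1 hj).1.symm.trans (Finset.mem_finsuppAntidiag.1 hk).1
  have hset : {n : σ →₀ ℕ | (n.sum fun _ e => e) ≤ d} =
      (Finset.range (d + 1)).biUnion (Finset.finsuppAntidiag (Finset.univ : Finset σ)) := by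
    ext n
    simp [Finsupp.sum_fintype]
  calc Module.finrank R (restrictTotalDegree σ R d)
      = Nat.card {n : σ →₀ ℕ | (n.sum fun _ e => e) ≤ d} :=
        Module.finrank_eq_nat_card_basis (basisRestrictSupport R _)
    _ = ∑ k ∈ Finset.range (d + 1), (Fintype.card σ).multichoose k := by
        rw [hset, Nat.card_coe_set_eq, Set.ncard_coe_finset, Finset.card_biUnion hdisj]
        simp [Finset.card_finsuppAntidiag_nat_eq_multichoose]
    _ = (d + Fintype.card σ).choose (Fintype.card σ) := Nat.sum_range_multichoose _ _

variable {σ K : Type*} [Field K]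

theorem exists_totalDegree_le_card_eval_eq_one (P : Finset (σ → K)) (p : σ → K) :
    ∃ f : MvPolynomial σ K, f.totalDegree ≤ P.card ∧ eval p f = 1 ∧
      ∀ q ∈ P, q ≠ p → eval q f = 0 := by
  classical
  have hline (q : σ → K) : ∃ L : MvPolynomial σ K, L.totalDegree ≤ 1 ∧ eval p L = 1 ∧
      (q ≠ p → eval q L = 0) := by
    by_cases hqp : q = p
    · exact ⟨1, by simp, by simp, fun h => absurd hqp h⟩
    · obtain ⟨i, hi⟩ := Function.ne_iff.1 hqp
      refine ⟨C (p i - q i)⁻¹ * (X i - C (q i)), ?_, ?_, by simp⟩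
      · grw [totalDegree_mul, totalDegree_C, totalDegree_sub_C_le, totalDegree_X]
      · simp [sub_ne_zero.2 (Ne.symm hi)]
  choose L hdeg hone hzero using hline
  refine ⟨∏ q ∈ P, L q, ?_, by simp [hone], fun q hq hqp => ?_⟩
  · grw [totalDegree_finsetProd, Finset.sum_le_card_nsmul _ _ 1 fun q _ => hdeg q, smul_eq_mul,
      mul_one]
  · rw [map_prod]
    exact Finset.prod_eq_zero hq (hzero q hqp)

theorem finrank_restrictTotalDegree_inf_vanishingIdeal [Finite σ] (P : Finset (σ → K)) {d : ℕ}
    (hd : P.card ≤ d) :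
    Module.finrank K ↥(restrictTotalDegree σ K d ⊓
        (vanishingIdeal K (P : Set (σ → K))).restrictScalars K) + P.card =
      Module.finrank K (restrictTotalDegree σ K d) := by
  classical
  let evalOn : restrictTotalDegree σ K d →ₗ[K] (P → K) :=
    (LinearMap.pi fun p : P => (aeval p.1).toLinearMap) ∘ₗ (restrictTotalDegree σ K d).subtype
  have hker : LinearMap.ker evalOn = ((vanishingIdeal K (P : Set (σ → K))).restrictScalars K).comap
      (restrictTotalDegree σ K d).subtype := by
    ext u
    simp [evalOn, funext_iff]
  have hsurj : Function.Surjective evalOn := by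
    intro c
    choose f hdeg hone hzero using fun p : P => exists_totalDegree_le_card_eval_eq_one P p.1
    refine ⟨∑ p, c p • ⟨f p, (mem_restrictTotalDegree _ _ _).2 ((hdeg p).trans hd)⟩, ?_⟩
    ext q
    have hother : ∀ p, p ≠ q → eval q.1 (f p) = 0 := fun p hp =>
      hzero p q q.2 fun h => hp (Subtype.ext h.symm)
    simp only [evalOn, LinearMap.comp_apply, map_sum, map_smul, Submodule.subtype_apply,
      LinearMap.pi_apply, Finset.sum_apply, Pi.smul_apply, AlgHom.toLinearMap_apply,
      aeval_eq_eval, smul_eq_mul]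
    rw [Finset.sum_eq_single q (fun p _ hp => by rw [hother p hp, mul_zero]) (by simp), hone,
      mul_one]
  rw [← Submodule.map_comap_subtype, ← hker, Submodule.finrank_map_subtype_eq,
    ← LinearMap.finrank_range_add_finrank_ker evalOn, LinearMap.range_eq_top.2 hsurj, finrank_top,
    Module.finrank_fintype_fun_eq_card, Fintype.card_coe, add_comm]

theorem map_mulLeft_restrictTotalDegree_le (f : MvPolynomial σ K) (d : ℕ) :
    (restrictTotalDegree σ K d).map (LinearMap.mulLeft K f) ≤
      restrictTotalDegree σ K (f.totalDegree + d) := by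
  rintro _ ⟨u, hu, rfl⟩
  rw [SetLike.mem_coe, mem_restrictTotalDegree] at hu
  rw [mem_restrictTotalDegree, LinearMap.mulLeft_apply]
  grw [totalDegree_mul, hu]

theorem finrank_map_mulLeft {f : MvPolynomial σ K} (hf : f ≠ 0)
    (V : Submodule K (MvPolynomial σ K)) :
    Module.finrank K (V.map (LinearMap.mulLeft K f)) = Module.finrank K V :=
  (Submodule.equivMapOfInjective _ (mul_right_injective₀ hf) V).finrank_eq.symm

theorem map_mulLeft_inf_map_mulLeft_le {f g : MvPolynomial σ K} (hg : g ≠ 0)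
    (h : IsRelPrime f g) (d : ℕ) :
    (restrictTotalDegree σ K (d + g.totalDegree)).map (LinearMap.mulLeft K f) ⊓
        (restrictTotalDegree σ K (d + f.totalDegree)).map (LinearMap.mulLeft K g) ≤
      (restrictTotalDegree σ K d).map (LinearMap.mulLeft K (f * g)) := by
  rintro _ ⟨⟨a, ha, rfl⟩, ⟨b, -, hab⟩⟩
  rw [LinearMap.mulLeft_apply, LinearMap.mulLeft_apply] at hab
  obtain ⟨c, rfl⟩ : g ∣ a := h.symm.dvd_of_dvd_mul_left ⟨b, hab.symm⟩
  refine ⟨c, ?_, mul_assoc f g c⟩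
  rw [SetLike.mem_coe, mem_restrictTotalDegree] at ha ⊢
  rcases eq_or_ne c 0 with rfl | hc
  · simp
  · rw [totalDegree_mul_of_isDomain hg hc] at ha
    omega

theorem card_le_totalDegree_mul_totalDegree {f g : MvPolynomial (Fin 2) K} (hg : g ≠ 0)
    (h : IsRelPrime f g) {P : Finset (Fin 2 → K)}
    (hP : ∀ p ∈ P, eval p f = 0 ∧ eval p g = 0) :
    P.card ≤ f.totalDegree * g.totalDegree := by
  rcases eq_or_ne f 0 with rfl | hf
  · rw [Finset.eq_empty_of_forall_notMem fun p hp =>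
      ((isRelPrime_zero_left.1 h).map (eval p)).ne_zero (hP p hp).2]
    exact Nat.zero_le _
  set m := f.totalDegree
  set n := g.totalDegree
  set N := P.card
  let V := restrictTotalDegree (Fin 2) K
  let A := (V (N + n)).map (LinearMap.mulLeft K f)
  let B := (V (N + m)).map (LinearMap.mulLeft K g)
  let W := V (N + m + n) ⊓ (vanishingIdeal K (P : Set (Fin 2 → K))).restrictScalars K
  have hAB : A ⊔ B ≤ W := by
    refine sup_le (le_inf ?_ ?_) (le_inf ?_ ?_)
    · exact (map_mulLeft_restrictTotalDegree_le f _).trans_eq (by congr 1; omega)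
    · rintro _ ⟨u, -, rfl⟩
      simp +contextual [aeval_eq_eval, hP]
    · exact (map_mulLeft_restrictTotalDegree_le g _).trans_eq (by congr 1; omega)
    · rintro _ ⟨u, -, rfl⟩
      simp +contextual [aeval_eq_eval, hP]
  have hinf : Module.finrank K ↥(A ⊓ B) ≤ Module.finrank K (V N) :=
    (Submodule.finrank_mono (map_mulLeft_inf_map_mulLeft_le hg h N)).trans_eq
      (finrank_map_mulLeft (mul_ne_zero hf hg) _)
  have hW : Module.finrank K W + N = Module.finrank K (V (N + m + n)) :=
    finrank_restrictTotalDegree_inf_vanishingIdeal P (by omega)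
  have hsup := Submodule.finrank_mono hAB
  have hsum := Submodule.finrank_sup_add_finrank_inf_eq A B
  rw [finrank_map_mulLeft hf, finrank_map_mulLeft hg] at hsum
  have hdim (d : ℕ) : 2 * Module.finrank K (V d) = (d + 2) * (d + 1) := by
    rw [finrank_restrictTotalDegree, Fintype.card_fin, Nat.choose_two_right]
    exact Nat.mul_div_cancel' (Nat.even_mul_pred_self _).two_dvd
  have := hdim N
  have := hdim (N + n)
  have := hdim (N + m)
  have := hdim (N + m + n)
  nlinarith

theorem exists_mem_isRelPrime {A : Type*} [Infinite K] [CommRing A] [IsDomain A]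
    [UniqueFactorizationMonoid A] [Algebra K A] {W : Submodule K A}
    (hW : ∀ f : A, Irreducible f → ∃ w ∈ W, ¬f ∣ w) {f₀ : A} (hf₀ : f₀ ≠ 0) :
    ∃ w ∈ W, IsRelPrime w f₀ := by
  classical
  let multiplesIn (f : (UniqueFactorizationMonoid.factors f₀).toFinset) : Submodule K W :=
    ((Ideal.span {f.1}).restrictScalars K).comap W.subtype
  have hcover : ⋃ f, (multiplesIn f : Set W) ≠ Set.univ := by
    intro h
    obtain ⟨⟨f, hf⟩, htop⟩ := Subspace.exists_eq_top_of_iUnion_eq_univ h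
    obtain ⟨w, hw, hfw⟩ :=
      hW f (UniqueFactorizationMonoid.irreducible_of_factor f (Multiset.mem_toFinset.1 hf))
    have : (⟨w, hw⟩ : W) ∈ multiplesIn ⟨f, hf⟩ := htop ▸ Submodule.mem_top
    exact hfw (Ideal.mem_span_singleton.1 this)
  obtain ⟨⟨w, hwW⟩, hw⟩ := (Set.ne_univ_iff_exists_notMem _).1 hcover
  refine ⟨w, hwW, fun d hdw hd₀ => ?_⟩
  by_contra hd
  obtain ⟨f, hf, hfd⟩ := WfDvdMonoid.exists_irreducible_factor hd (ne_zero_of_dvd_ne_zero hf₀ hd₀)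
  obtain ⟨f', hf', hff'⟩ :=
    UniqueFactorizationMonoid.exists_mem_factors_of_dvd hf₀ hf (hfd.trans hd₀)
  exact hw (Set.mem_iUnion.2 ⟨⟨f', Multiset.mem_toFinset.2 hf'⟩,
    Ideal.mem_span_singleton.2 ((hff'.symm.dvd.trans hfd).trans hdw)⟩)

theorem exists_irreducible_forall_dvd [Infinite K] {S : Set (MvPolynomial (Fin 2) K)} {d : ℕ}
    (hdeg : ∀ f ∈ S, f.totalDegree ≤ d) {f₀ : MvPolynomial (Fin 2) K} (hf₀S : f₀ ∈ S) (hf₀ : f₀ ≠ 0)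
    {Q : Finset (Fin 2 → K)} (hQ : d ^ 2 < Q.card) (hzero : ∀ f ∈ S, ∀ q ∈ Q, eval q f = 0) :
    ∃ f, Irreducible f ∧ ∀ g ∈ S, f ∣ g := by
  by_contra! hcon
  let V : Submodule K (MvPolynomial (Fin 2) K) := restrictTotalDegree (Fin 2) K d ⊓
    (vanishingIdeal K (Q : Set (Fin 2 → K))).restrictScalars K
  have hV {f} : f ∈ V ↔ f.totalDegree ≤ d ∧ ∀ q ∈ Q, eval q f = 0 := by
    simp [V, mem_restrictTotalDegree, aeval_eq_eval]
  have hspan : Submodule.span K S ≤ V :=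
    Submodule.span_le.2 fun f hf => hV.2 ⟨hdeg f hf, hzero f hf⟩
  obtain ⟨w, hw, hrel⟩ := exists_mem_isRelPrime (W := Submodule.span K S) (fun f hf =>
    (hcon f hf).imp fun g hg => ⟨Submodule.subset_span hg.1, hg.2⟩) hf₀
  have hcard := card_le_totalDegree_mul_totalDegree hf₀ hrel fun q hq =>
    ⟨(hV.1 (hspan hw)).2 q hq, hzero f₀ hf₀S q hq⟩
  grw [(hV.1 (hspan hw)).1, hdeg f₀ hf₀S, ← sq] at hcard
  exact absurd hQ hcard.not_gt

end PlaneBezout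

section Elimination

theorem totalDegree_det_le {σ n R : Type*} [CommRing R] [Fintype n] [DecidableEq n]
    {M : Matrix n n (MvPolynomial σ R)} {d : n → ℕ} (hM : ∀ i j, (M i j).totalDegree ≤ d j) :
    M.det.totalDegree ≤ ∑ j, d j := by
  rw [Matrix.det_apply]
  refine totalDegree_finsetSum_le fun τ _ => ?_
  rw [Units.smul_def]
  grw [totalDegree_smul_le, totalDegree_finsetProd]
  exact Finset.sum_le_sum fun j _ => hM _ j

theorem resultant_ne_zero_of_irreducible {A : Type*} [CommRing A] [IsDomain A]
    [UniqueFactorizationMonoid A] {f g : Polynomial A} (hf : Irreducible f)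
    (hdeg : f.natDegree ≠ 0) (hfg : ¬f ∣ g) : f.resultant g ≠ 0 := by
  classical
  let : NormalizedGCDMonoid A := Classical.arbitrary _
  let K := FractionRing A
  have hinj : Function.Injective (algebraMap A K) := IsFractionRing.injective A K
  have hprim : f.IsPrimitive := hf.isPrimitive hdeg
  have hirr : Irreducible (f.map (algebraMap A K)) :=
    hprim.irreducible_iff_irreducible_map_fraction_map.1 hf
  have hcop : IsCoprime (f.map (algebraMap A K)) (g.map (algebraMap A K)) :=
    hirr.coprime_iff_not_dvd.2 (mt (hprim.dvd_iff_fraction_map_dvd_fraction_map K).2 hfg)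
  have hres := Polynomial.resultant_ne_zero _ _ hcop
  rw [Polynomial.natDegree_map_eq_of_injective hinj, Polynomial.natDegree_map_eq_of_injective hinj,
    Polynomial.resultant_map_map] at hres
  exact ne_zero_of_map hres

/-- The splitting of `σ ⊕ Fin 2` which sends `inr i` to `none` and the other element of `Fin 2` to
`some none`; it prepares the elimination of the `i`-th fibre coordinate. -/
def fiberEquiv (σ : Type*) (i : Fin 2) : σ ⊕ Fin 2 ≃ Option (Option σ) where
  toFun := Sum.elim (fun m => some (some m)) fun j => if j = i then none else some none
  invFun o := o.elim (Sum.inr i) fun o => o.elim (Sum.inr (1 - i)) Sum.inl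
  left_inv := by
    rintro (m | j)
    · rfl
    · fin_cases i <;> fin_cases j <;> rfl
  right_inv := by rintro (_ | _ | m) <;> fin_cases i <;> rfl

theorem sum_elim_eq_comp_fiberEquiv {σ α : Type*} (i : Fin 2) (p : σ → α) (q : Fin 2 → α) :
    Sum.elim p q =
      (fun o => Option.elim o (q i) fun o => Option.elim o (q (1 - i)) p) ∘ fiberEquiv σ i := by
  ext (m | j)
  · rfl
  · fin_cases i <;> fin_cases j <;> rfl

theorem exists_infinite_image_apply {α : Type*} {T : Set (Fin 2 → α)} (hT : T.Infinite) :
    ∃ i : Fin 2, ((fun q : Fin 2 → α => q (1 - i)) '' T).Infinite := by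
  by_contra! h
  refine hT ((Set.Finite.pi' fun j => h (1 - j)).subset fun q hq j => ⟨q, hq, ?_⟩)
  rw [sub_sub_cancel]

variable {σ R : Type*} [CommRing R]

/-- The resultant of `F` and `H` with respect to the variable `none`. -/
def eliminant (F H : MvPolynomial (Option σ) R) : MvPolynomial σ R :=
  (optionEquivLeft R σ F).resultant (optionEquivLeft R σ H)

theorem eliminant_ne_zero [IsDomain R] [UniqueFactorizationMonoid R]
    {F H : MvPolynomial (Option σ) R} (hF : Irreducible F) (hdeg : degreeOf none F ≠ 0)
    (hFH : ¬F ∣ H) : eliminant F H ≠ 0 :=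
  resultant_ne_zero_of_irreducible ((MulEquiv.irreducible_iff (optionEquivLeft R σ)).2 hF)
    (by rwa [natDegree_optionEquivLeft]) (mt (map_dvd_iff (optionEquivLeft R σ)).1 hFH)

theorem totalDegree_eliminant_le (F H : MvPolynomial (Option σ) R) :
    (eliminant F H).totalDegree ≤ 2 * F.totalDegree * H.totalDegree := by
  let d : Fin ((optionEquivLeft R σ F).natDegree + (optionEquivLeft R σ H).natDegree) → ℕ :=
    Fin.append (fun _ => H.totalDegree) (fun _ => F.totalDegree)
  have hentry (i j) : ((optionEquivLeft R σ F).sylvester (optionEquivLeft R σ H)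
      (optionEquivLeft R σ F).natDegree (optionEquivLeft R σ H).natDegree i j).totalDegree ≤
      d j := by
    refine Fin.addCases (fun k => ?_) (fun k => ?_) j <;>
      simp only [d, Polynomial.sylvester, Matrix.of_apply, Fin.addCases_left, Fin.addCases_right,
        Fin.append_left, Fin.append_right] <;>
      split_ifs <;> simp [totalDegree_coeff_optionEquivLeft_le]
  have hF : (optionEquivLeft R σ F).natDegree ≤ F.totalDegree :=
    (natDegree_optionEquivLeft R F).trans_le (degreeOf_le_totalDegree F none)
  have hH : (optionEquivLeft R σ H).natDegree ≤ H.totalDegree :=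
    (natDegree_optionEquivLeft R H).trans_le (degreeOf_le_totalDegree H none)
  calc (eliminant F H).totalDegree
      ≤ ∑ j, d j := totalDegree_det_le hentry
    _ = (optionEquivLeft R σ F).natDegree * H.totalDegree +
          (optionEquivLeft R σ H).natDegree * F.totalDegree := by
        simp [d, Fin.sum_univ_add]
    _ ≤ F.totalDegree * H.totalDegree + H.totalDegree * F.totalDegree := by gcongr
    _ = 2 * F.totalDegree * H.totalDegree := by ring

theorem eval_eliminant_eq_zero {F H : MvPolynomial (Option σ) R} (hdeg : degreeOf none F ≠ 0)
    {s : R} {p : σ → R} (hF : eval (fun o => Option.elim o s p) F = 0)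
    (hH : eval (fun o => Option.elim o s p) H = 0) : eval p (eliminant F H) = 0 := by
  obtain ⟨a, b, -, -, hab⟩ := Polynomial.exists_mul_add_mul_eq_C_resultant
    (optionEquivLeft R σ F) (optionEquivLeft R σ H) le_rfl le_rfl
    (Or.inl (by rwa [natDegree_optionEquivLeft]))
  rw [optionEquivLeft_elim_eval] at hF hH
  have := congrArg (fun u => (u.map (eval p)).eval s) hab
  simpa [hF, hH, eliminant] using this.symm

theorem exists_eval_eq_zero_of_infinite [IsDomain R] {F : MvPolynomial (Option σ) R} (hF : F ≠ 0) :
    ∃ r : MvPolynomial σ R, r ≠ 0 ∧ r.totalDegree ≤ F.totalDegree ∧ ∀ p : σ → R,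
      {t | eval (fun o => Option.elim o t p) F = 0}.Infinite → eval p r = 0 := by
  refine ⟨(optionEquivLeft R σ F).leadingCoeff, by simpa using hF,
    totalDegree_coeff_optionEquivLeft_le _ _ _ _, fun p hp => ?_⟩
  simp only [optionEquivLeft_elim_eval] at hp
  have hzero : (optionEquivLeft R σ F).map (eval p) = 0 :=
    Polynomial.eq_zero_of_infinite_isRoot _ hp
  rw [Polynomial.leadingCoeff, ← Polynomial.coeff_map, hzero, Polynomial.coeff_zero]

theorem exists_eval_eq_zero_of_infinite_image [IsDomain R] [UniqueFactorizationMonoid R]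
    {F H : MvPolynomial (σ ⊕ Fin 2) R} (hF : Irreducible F) (hFH : ¬F ∣ H) {i : Fin 2}
    (hi : degreeOf (Sum.inr i) F ≠ 0) :
    ∃ r : MvPolynomial σ R, r ≠ 0 ∧ r.totalDegree ≤ 2 * F.totalDegree * H.totalDegree ∧
      ∀ p, ((fun q : Fin 2 → R => q (1 - i)) ''
        {q | eval (Sum.elim p q) F = 0 ∧ eval (Sum.elim p q) H = 0}).Infinite → eval p r = 0 := by
  let e := fiberEquiv σ i
  have hdeg : degreeOf none (rename e F) ≠ 0 := by
    rw [show none = e (Sum.inr i) by simp [e, fiberEquiv], degreeOf_rename_of_injective e.injective]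
    exact hi
  have hne := eliminant_ne_zero ((MulEquiv.irreducible_iff (renameEquiv R e)).2 hF) hdeg
    (mt (map_dvd_iff (renameEquiv R e)).1 hFH)
  obtain ⟨r, hr, hrdeg, hrzero⟩ := exists_eval_eq_zero_of_infinite hne
  refine ⟨r, hr, hrdeg.trans ((totalDegree_eliminant_le _ _).trans_eq ?_), fun p hp =>
    hrzero p (hp.mono ?_)⟩
  · rw [totalDegree_renameEquiv, totalDegree_renameEquiv]
  · rintro _ ⟨q, ⟨hqF, hqH⟩, rfl⟩
    rw [sum_elim_eq_comp_fiberEquiv i, ← eval_rename] at hqF hqH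
    exact eval_eliminant_eq_zero hdeg hqF hqH

theorem exists_eval_eq_zero_of_infinite_fiber [IsDomain R] [UniqueFactorizationMonoid R]
    {F H : MvPolynomial (σ ⊕ Fin 2) R} (hF : Irreducible F) (hFH : ¬F ∣ H)
    (hdeg : ∀ i : Fin 2, degreeOf (Sum.inr i) F ≠ 0) :
    ∃ r : MvPolynomial σ R, r ≠ 0 ∧ r.totalDegree ≤ 4 * F.totalDegree * H.totalDegree ∧
      ∀ p, {q | eval (Sum.elim p q) F = 0 ∧ eval (Sum.elim p q) H = 0}.Infinite →
        eval p r = 0 := by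
  choose r hr hrdeg hrzero using fun i => exists_eval_eq_zero_of_infinite_image hF hFH (hdeg i)
  refine ⟨∏ i, r i, Finset.prod_ne_zero_iff.2 fun i _ => hr i, ?_, fun p hp => ?_⟩
  · grw [totalDegree_finsetProd, Finset.sum_le_card_nsmul _ _ _ fun i _ => hrdeg i]
    simp only [Finset.card_univ, Fintype.card_fin, smul_eq_mul]
    exact le_of_eq (by ring)
  · obtain ⟨i, hi⟩ := exists_infinite_image_apply hp
    rw [map_prod]
    exact Finset.prod_eq_zero (Finset.mem_univ i) (hrzero i p hi)

end Elimination

section ZeroLoci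

variable {σ K : Type*} [Field K]

theorem dvd_of_forall_eval_eq_zero [Finite σ] [IsAlgClosed K] {f u : MvPolynomial σ K}
    (hf : Irreducible f) (h : ∀ p, eval p f = 0 → eval p u = 0) : f ∣ u := by
  have := (Ideal.span_singleton_prime hf.ne_zero).2 hf.prime
  rw [← Ideal.mem_span_singleton, ← IsPrime.vanishingIdeal_zeroLocus (K := K) (Ideal.span {f}),
    zeroLocus_span]
  simpa only [mem_vanishingIdeal_iff, aeval_eq_eval, Set.mem_singleton_iff, forall_eq,
    Set.mem_ofPred_eq] using h

theorem dvd_of_forall_eval_eq_zero_of_not_isUnit [Finite σ] [IsAlgClosed K]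
    {f g : MvPolynomial σ K} (hf : Irreducible f) (hg : ¬IsUnit g)
    (h : ∀ p, eval p g = 0 → eval p f = 0) : f ∣ g := by
  rcases eq_or_ne g 0 with rfl | hg0
  · exact dvd_zero f
  obtain ⟨g', hg', hg'g⟩ := WfDvdMonoid.exists_irreducible_factor hg hg0
  have hg'f : g' ∣ f := dvd_of_forall_eval_eq_zero hg' fun p hp =>
    h p (zero_dvd_iff.1 (hp ▸ map_dvd (eval p) hg'g))
  exact (hg'.associated_of_dvd hf hg'f).symm.dvd.trans hg'g

theorem degreeOf_eq_zero_of_dvd_X_sub_C {f : MvPolynomial σ K} {i j : σ} {a : K} (hij : i ≠ j)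
    (h : f ∣ X i - C a) : degreeOf j f = 0 := by
  classical
  obtain ⟨u, hu⟩ := h
  have hne : (X i - C a : MvPolynomial σ K) ≠ 0 := fun h0 => by
    simpa using congrArg (eval fun _ => a + 1) h0
  have hdeg : degreeOf j (X i - C a : MvPolynomial σ K) = 0 := by
    refine Nat.le_zero.1 ((degreeOf_sub_le _ _ _).trans ?_)
    simp [degreeOf_X, hij.symm]
  rw [hu, degreeOf_mul_eq (left_ne_zero_of_mul (hu ▸ hne)) (right_ne_zero_of_mul (hu ▸ hne))]
    at hdeg
  omega

theorem totalDegree_pos_of_irreducible {f : MvPolynomial σ K} (hf : Irreducible f) :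
    0 < f.totalDegree := by
  refine Nat.pos_of_ne_zero fun h => hf.not_isUnit ?_
  have hC := totalDegree_eq_zero_iff_eq_C.1 h
  refine isUnit_iff_eq_C_of_isReduced.2 ⟨_, isUnit_iff_ne_zero.2 fun h0 => hf.ne_zero ?_, hC⟩
  rw [hC, h0, C_0]

theorem infinite_setOf_eval_eq_zero [Finite σ] [Nontrivial σ] [IsAlgClosed K]
    {f : MvPolynomial σ K} (hf : Irreducible f) : {p | eval p f = 0}.Infinite := by
  intro hfin
  have hdeg (j : σ) : degreeOf j f = 0 := by
    obtain ⟨i, hij⟩ := exists_ne j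
    have hdvd : f ∣ ∏ p ∈ hfin.toFinset, (X i - C (p i)) := by
      refine dvd_of_forall_eval_eq_zero hf fun p hp => ?_
      rw [map_prod]
      exact Finset.prod_eq_zero (hfin.mem_toFinset.2 hp) (by simp)
    obtain ⟨p, -, hp⟩ := hf.prime.exists_mem_finset_dvd hdvd
    exact degreeOf_eq_zero_of_dvd_X_sub_C hij hp
  refine (totalDegree_pos_of_irreducible hf).ne' <| totalDegree_eq_zero_iff_eq_C.2 <|
    vars_eq_empty_iff_eq_C.1 <| Finset.eq_empty_of_forall_notMem fun j => ?_
  simp [mem_vars_iff_degreeOf_ne_zero, hdeg]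

theorem exists_eval_pderiv_eq_mul [Finite σ] [IsAlgClosed K] {g u : MvPolynomial σ K}
    (hg : Irreducible g) (hu : ∀ p, eval p g = 0 → eval p u = 0) :
    ∃ v : MvPolynomial σ K, ∀ p, eval p g = 0 → ∀ i,
      eval p (pderiv i u) = eval p (pderiv i g) * eval p v := by
  obtain ⟨v, rfl⟩ := dvd_of_forall_eval_eq_zero hg hu
  exact ⟨v, fun p hp i => by simp [hp, mul_comm]⟩

end ZeroLoci

section Sections

variable {σ τ R : Type*} [CommRing R]

theorem totalDegree_aeval_le {v : σ → MvPolynomial τ R} (hv : ∀ i, (v i).totalDegree ≤ 1)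
    (F : MvPolynomial σ R) : (aeval v F).totalDegree ≤ F.totalDegree := by
  rw [aeval_def, eval₂_eq]
  refine totalDegree_finsetSum_le fun m hm => ?_
  have hmon : (∏ i ∈ m.support, v i ^ m i).totalDegree ≤ F.totalDegree :=
    calc _ ≤ ∑ i ∈ m.support, (v i ^ m i).totalDegree := totalDegree_finsetProd _ _
      _ ≤ ∑ i ∈ m.support, m i := Finset.sum_le_sum fun i _ =>
        (totalDegree_pow _ _).trans (mul_le_of_le_one_right (Nat.zero_le _) (hv i))
      _ ≤ F.totalDegree := le_totalDegree hm
  refine (totalDegree_mul _ _).trans ?_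
  rw [algebraMap_eq, totalDegree_C]
  omega

/-- The section of `F` over the point `p`: the polynomial `F (p, ·)` obtained by substituting `p`
for the first group of variables. -/
def sectionAt (F : MvPolynomial (σ ⊕ τ) R) (p : σ → R) : MvPolynomial τ R :=
  aeval (Sum.elim (fun i => C (p i)) X) F

theorem eval_sectionAt (F : MvPolynomial (σ ⊕ τ) R) (p : σ → R) (q : τ → R) :
    eval q (sectionAt F p) = eval (Sum.elim p q) F := by
  induction F using MvPolynomial.induction_on with
  | C a => simp [sectionAt]
  | add f g hf hg => simp_all [sectionAt]
  | mul_X f i hf => cases i <;> simp_all [sectionAt]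

theorem pderiv_sectionAt (F : MvPolynomial (σ ⊕ τ) R) (p : σ → R) (i : τ) :
    pderiv i (sectionAt F p) = sectionAt (pderiv (Sum.inr i) F) p := by
  classical
  induction F using MvPolynomial.induction_on with
  | C a => simp [sectionAt]
  | add f g hf hg => simp_all [sectionAt]
  | mul_X f j hf => cases j <;> simp_all [sectionAt, pderiv_X, Pi.single_apply, apply_ite]

theorem totalDegree_sectionAt_le [Nontrivial R] (F : MvPolynomial (σ ⊕ τ) R) (p : σ → R) :
    (sectionAt F p).totalDegree ≤ F.totalDegree :=
  totalDegree_aeval_le (by simp) F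

theorem eval_sectionAt_rename_swap (F : MvPolynomial (σ ⊕ τ) R) (p : σ → R) (q : τ → R) :
    eval p (sectionAt (rename Sum.swap F) q) = eval (Sum.elim p q) F := by
  rw [eval_sectionAt, eval_rename]
  congr 2
  ext i
  cases i <;> rfl

end Sections

section Obstruction

variable {σ τ R : Type*} [CommRing R]

theorem totalDegree_pderiv_le (i : σ) (F : MvPolynomial σ R) :
    (pderiv i F).totalDegree ≤ F.totalDegree - 1 := by
  classical
  rw [totalDegree, Finset.sup_le_iff]
  intro m hm
  rw [mem_support_iff, coeff_pderiv] at hm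
  have hle := le_totalDegree (mem_support_iff.2 (left_ne_zero_of_mul hm))
  rw [Finsupp.sum_add_index' (fun _ => rfl) (fun _ _ _ => rfl),
    Finsupp.sum_single_index rfl] at hle
  omega

theorem pderiv_pderiv_comm (i j : σ) (F : MvPolynomial σ R) :
    pderiv i (pderiv j F) = pderiv j (pderiv i F) := by
  classical
  induction F using MvPolynomial.induction_on with
  | C a => simp
  | add f g hf hg => simp [hf, hg]
  | mul_X f m hf =>
    simp only [Derivation.leibniz, map_add, smul_eq_mul, hf, pderiv_X, Pi.single_apply]
    split_ifs <;> simp <;> ring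

/-- The numerator of the partial derivative in direction `m` of the rational function `Fᵢ / Fⱼ`. -/
def pderivRatioNum (i j m : σ) (F : MvPolynomial σ R) : MvPolynomial σ R :=
  pderiv j F * pderiv m (pderiv i F) - pderiv i F * pderiv m (pderiv j F)

/-- The obstruction to splitting the variables of `F` into `{i, j}` and `{k, l}`: on the
hypersurface `F = 0` it is, up to a nonvanishing factor, the derivative of `Fᵢ / Fⱼ` along the
direction `(F_l, -F_k)` tangent to the `(k, l)`-plane. -/
def splittingObstruction (i j k l : σ) (F : MvPolynomial σ R) : MvPolynomial σ R :=
  pderiv l F * pderivRatioNum i j k F - pderiv k F * pderivRatioNum i j l F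

theorem splittingObstruction_comm (i j k l : σ) (F : MvPolynomial σ R) :
    splittingObstruction k l i j F = splittingObstruction i j k l F := by
  simp only [splittingObstruction, pderivRatioNum, pderiv_pderiv_comm i k, pderiv_pderiv_comm i l,
    pderiv_pderiv_comm j k, pderiv_pderiv_comm j l]
  ring

theorem splittingObstruction_swap_left (i j k l : σ) (F : MvPolynomial σ R) :
    splittingObstruction j i k l F = -splittingObstruction i j k l F := by
  simp only [splittingObstruction, pderivRatioNum]
  ring

theorem splittingObstruction_swap_right (i j k l : σ) (F : MvPolynomial σ R) :
    splittingObstruction i j l k F = -splittingObstruction i j k l F := by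
  simp only [splittingObstruction, neg_sub]

theorem splittingObstruction_rename {f : σ → τ} (hf : f.Injective) (i j k l : σ)
    (F : MvPolynomial σ R) : splittingObstruction (f i) (f j) (f k) (f l) (rename f F) =
      rename f (splittingObstruction i j k l F) := by
  simp only [splittingObstruction, pderivRatioNum, pderiv_rename hf, map_sub, map_mul]

theorem totalDegree_splittingObstruction_le (i j k l : σ) (F : MvPolynomial σ R) :
    (splittingObstruction i j k l F).totalDegree ≤ 3 * F.totalDegree := by
  have h₁ (i) : (pderiv i F).totalDegree ≤ F.totalDegree :=
    (totalDegree_pderiv_le i F).trans (Nat.sub_le _ _)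
  have h₂ (i m) : (pderiv m (pderiv i F)).totalDegree ≤ F.totalDegree :=
    (totalDegree_pderiv_le m _).trans ((Nat.sub_le _ _).trans (h₁ i))
  have hnum (m) : (pderivRatioNum i j m F).totalDegree ≤ 2 * F.totalDegree := by
    unfold pderivRatioNum
    grw [totalDegree_sub, totalDegree_mul, totalDegree_mul, h₁, h₁, h₂, h₂]
    omega
  unfold splittingObstruction
  grw [totalDegree_sub, totalDegree_mul, totalDegree_mul, h₁, h₁, hnum, hnum]
  omega

theorem eval_splittingObstruction_eq_zero {K : Type*} [Field K] [IsAlgClosed K] [Finite σ]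
    [Finite τ] {F : MvPolynomial (σ ⊕ τ) K} {g : MvPolynomial σ K} {f : MvPolynomial τ K}
    (hg : Irreducible g) (hf : Irreducible f)
    (h : ∀ p, eval p g = 0 → ∀ q, eval q f = 0 → eval (Sum.elim p q) F = 0) (i j : σ) (k l : τ)
    {p : σ → K} {q : τ → K} (hp : eval p g = 0) (hq : eval q f = 0) :
    eval (Sum.elim p q) (splittingObstruction (Sum.inl i) (Sum.inl j) (Sum.inr k) (Sum.inr l) F) =
      0 := by
  have hgF (q : τ → K) (hq : eval q f = 0) : ∃ v, ∀ i,
      eval (Sum.elim p q) (pderiv (Sum.inl i) F) = eval p (pderiv i g) * v := by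
    obtain ⟨v, hv⟩ := exists_eval_pderiv_eq_mul (u := sectionAt (rename Sum.swap F) q) hg
      fun p hp => by rw [eval_sectionAt_rename_swap]; exact h p hp q hq
    refine ⟨eval p v, fun i => ?_⟩
    rw [← hv p hp, pderiv_sectionAt, ← Sum.swap_inl,
      pderiv_rename Sum.swap_leftInverse.injective, eval_sectionAt_rename_swap]
  obtain ⟨v, hv⟩ := hgF q hq
  obtain ⟨u, hu⟩ := exists_eval_pderiv_eq_mul (u := sectionAt F p) hf fun q hq => by
    rw [eval_sectionAt]; exact h p hp q hq
  obtain ⟨w, hw⟩ := exists_eval_pderiv_eq_mul hf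
    (u := C (eval p (pderiv j g)) * sectionAt (pderiv (Sum.inl i) F) p -
      C (eval p (pderiv i g)) * sectionAt (pderiv (Sum.inl j) F) p) fun q hq => by
    obtain ⟨v, hv⟩ := hgF q hq
    simp only [map_sub, map_mul, eval_C, eval_sectionAt, hv]
    ring
  have hwk := hw q hq k
  have hwl := hw q hq l
  have huk := hu q hq k
  have hul := hu q hq l
  simp only [map_sub, pderiv_C_mul, map_mul, eval_C, pderiv_sectionAt, eval_sectionAt]
    at hwk hwl huk hul
  simp only [splittingObstruction, pderivRatioNum, map_sub, map_mul, hv, huk, hul]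
  linear_combination (eval q (pderiv l f) * eval q u * v) * hwk -
    (eval q (pderiv k f) * eval q u * v) * hwl

theorem forall_dvd_splittingObstruction {F : MvPolynomial (Fin 4) R}
    (h₁ : F ∣ splittingObstruction 0 1 2 3 F) (h₂ : F ∣ splittingObstruction 2 1 0 3 F)
    (h₃ : F ∣ splittingObstruction 3 1 2 0 F) (i j k l : Fin 4) (hnd : [i, j, k, l].Nodup) :
    F ∣ splittingObstruction i j k l F := by
  have hone (i k l : Fin 4) (hnd : [i, 1, k, l].Nodup) : F ∣ splittingObstruction i 1 k l F := by
    wlog hkl : k < l generalizing k l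
    · rw [splittingObstruction_swap_right, dvd_neg]
      exact this l k (by grind) (by grind)
    have hcases : (i = 0 ∧ k = 2 ∧ l = 3) ∨ (i = 2 ∧ k = 0 ∧ l = 3) ∨ (i = 3 ∧ k = 0 ∧ l = 2) := by
      decide +revert
    obtain ⟨rfl, rfl, rfl⟩ | ⟨rfl, rfl, rfl⟩ | ⟨rfl, rfl, rfl⟩ := hcases
    · exact h₁
    · exact h₂
    · rwa [splittingObstruction_swap_right, dvd_neg]
  have hmem : i = 1 ∨ j = 1 ∨ k = 1 ∨ l = 1 := by decide +revert
  obtain rfl | rfl | rfl | rfl := hmem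
  · rw [splittingObstruction_swap_left, dvd_neg]
    exact hone j k l (by grind)
  · exact hone i k l hnd
  · rw [splittingObstruction_comm, splittingObstruction_swap_left, dvd_neg]
    exact hone l i j (by grind)
  · rw [splittingObstruction_comm]
    exact hone k i j (by grind)

theorem degreeOf_ne_zero_of_pderiv_ne_zero {F : MvPolynomial σ R} {i : σ} (h : pderiv i F ≠ 0) :
    degreeOf i F ≠ 0 :=
  mem_vars_iff_degreeOf_ne_zero.1 (by_contra fun hi => h (pderiv_eq_zero_of_notMem_vars hi))

theorem not_dvd_pderiv [IsDomain R] {F : MvPolynomial σ R} {i : σ} (h : pderiv i F ≠ 0) :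
    ¬F ∣ pderiv i F := fun hdvd => by
  have hle := (totalDegree_le_of_dvd_of_isDomain hdvd h).trans (totalDegree_pderiv_le i F)
  rw [totalDegree_eq_zero_iff_eq_C.1 (by omega : F.totalDegree = 0), pderiv_C] at h
  exact h rfl

end Obstruction

section ProductCurves

variable {K : Type*} [Field K] [IsAlgClosed K]

theorem exists_sectionAt_ne_zero {σ τ : Type*} [Finite σ] [Finite τ]
    {F : MvPolynomial (σ ⊕ τ) K} (hF : Irreducible F) {j : τ}
    (hj : degreeOf (Sum.inr j) F ≠ 0) {g : MvPolynomial σ K} (hg : Irreducible g) :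
    ∃ p, eval p g = 0 ∧ sectionAt F p ≠ 0 := by
  classical
  by_contra! hzero
  have hunit : ¬IsUnit (rename Sum.inl g : MvPolynomial (σ ⊕ τ) K) := fun h => hg.not_isUnit <| by
    simpa only [killCompl_rename_app] using h.map (killCompl Sum.inl_injective)
  obtain ⟨u, hu⟩ := dvd_of_forall_eval_eq_zero_of_not_isUnit hF hunit fun v hv => by
    rw [← Sum.elim_comp_inl_inr v, ← eval_sectionAt, hzero _ (by rwa [eval_rename] at hv), map_zero]
  have hne : F * u ≠ 0 := hu ▸
    (rename_eq_zero_iff_of_injective _ Sum.inl_injective).not.2 hg.ne_zero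
  have hdeg : degreeOf (Sum.inr j) (rename Sum.inl g : MvPolynomial (σ ⊕ τ) K) = 0 := by
    by_contra h
    simpa using mem_vars_rename _ _ (mem_vars_iff_degreeOf_ne_zero.2 h)
  rw [hu, degreeOf_mul_eq hF.ne_zero (right_ne_zero_of_mul hne)] at hdeg
  omega

theorem exists_forall_irreducible_dvd_eval_eq_zero {σ τ : Type*} [Finite σ] [Finite τ]
    {F : MvPolynomial (σ ⊕ τ) K} (hF : Irreducible F) {j : τ}
    (hj : degreeOf (Sum.inr j) F ≠ 0) {r : MvPolynomial σ K} (hr : r ≠ 0) :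
    ∃ h : MvPolynomial τ K, h ≠ 0 ∧ h.totalDegree ≤ F.totalDegree * r.totalDegree ∧
      ∀ g, Irreducible g → g ∣ r → ∀ q : τ → K,
        (∀ p, eval p g = 0 → eval (Sum.elim p q) F = 0) → eval q h = 0 := by
  induction r using WfDvdMonoid.induction_on_irreducible with
  | zero => exact absurd rfl hr
  | unit u hu =>
    exact ⟨1, one_ne_zero, by simp,
      fun g hg hgu => absurd (isUnit_of_dvd_unit hgu hu) hg.not_isUnit⟩
  | mul r g₀ hr0 hg₀ ih =>
    obtain ⟨h, hh0, hhdeg, hh⟩ := ih hr0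
    obtain ⟨p, hp, hsec⟩ := exists_sectionAt_ne_zero hF hj hg₀
    refine ⟨sectionAt F p * h, mul_ne_zero hsec hh0, ?_, fun g hg hgr q hq => ?_⟩
    · have hpos : 1 ≤ g₀.totalDegree := totalDegree_pos_of_irreducible hg₀
      grw [totalDegree_mul, totalDegree_sectionAt_le, hhdeg,
        totalDegree_mul_of_isDomain hg₀.ne_zero hr0, ← hpos, mul_add, mul_one]
    · rw [map_mul, mul_eq_zero]
      rcases hg.prime.dvd_or_dvd hgr with hgg₀ | hgr
      · exact Or.inl <| (eval_sectionAt F p q).trans <| hq p <| zero_dvd_iff.1 <| hp ▸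
          map_dvd (eval p) (hg.associated_of_dvd hg₀ hgg₀).symm.dvd
      · exact Or.inr (hh g hg hgr q hq)

theorem exists_forall_dvd_of_not_dvd_splittingObstruction {σ : Type*} [Finite σ]
    {F : MvPolynomial (σ ⊕ Fin 2) K} (hF : Irreducible F)
    (hdeg : ∀ i : Fin 2, degreeOf (Sum.inr i) F ≠ 0) {i j : σ}
    (hobs : ¬F ∣ splittingObstruction (Sum.inl i) (Sum.inl j) (Sum.inr 0) (Sum.inr 1) F) :
    ∃ r : MvPolynomial σ K, r ≠ 0 ∧ r.totalDegree ≤ 12 * F.totalDegree ^ 2 ∧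
      ∀ (g : MvPolynomial σ K) (f : MvPolynomial (Fin 2) K), Irreducible g → Irreducible f →
        (∀ p, eval p g = 0 → ∀ q, eval q f = 0 → eval (Sum.elim p q) F = 0) → g ∣ r := by
  obtain ⟨r, hr0, hrdeg, hr⟩ := exists_eval_eq_zero_of_infinite_fiber hF hobs hdeg
  refine ⟨r, hr0, ?_, fun g f hg hf h => dvd_of_forall_eval_eq_zero hg fun p hp => hr p ?_⟩
  · grw [hrdeg, totalDegree_splittingObstruction_le]
    exact le_of_eq (by ring)
  · exact (infinite_setOf_eval_eq_zero hf).mono fun q hq =>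
      ⟨h p hp q hq, eval_splittingObstruction_eq_zero hg hf h i j 0 1 hp hq⟩

theorem exists_curve_of_not_dvd_splittingObstruction {σ : Type*} [Finite σ]
    {F : MvPolynomial (σ ⊕ Fin 2) K} (hF : Irreducible F)
    (hdeg : ∀ i : Fin 2, degreeOf (Sum.inr i) F ≠ 0) {i j : σ}
    (hobs : ¬F ∣ splittingObstruction (Sum.inl i) (Sum.inl j) (Sum.inr 0) (Sum.inr 1) F) :
    ∃ h : MvPolynomial (Fin 2) K, h ≠ 0 ∧ h.totalDegree ≤ 13 * F.totalDegree ^ 3 ∧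
      (∀ q, (∀ p, eval (Sum.elim p q) F = 0) → eval q h = 0) ∧
      ∀ (g : MvPolynomial σ K) (Q : Finset (Fin 2 → K)), Irreducible g →
        F.totalDegree ^ 2 < Q.card →
        (∀ q ∈ Q, ∀ p, eval p g = 0 → eval (Sum.elim p q) F = 0) →
        ∀ q, (∀ p, eval p g = 0 → eval (Sum.elim p q) F = 0) → eval q h = 0 := by
  obtain ⟨r, hr0, hrdeg, hr⟩ := exists_forall_dvd_of_not_dvd_splittingObstruction hF hdeg hobs
  have hX : Irreducible (X i : MvPolynomial σ K) := X_prime.irreducible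
  obtain ⟨h, hh0, hhdeg, hh⟩ := exists_forall_irreducible_dvd_eval_eq_zero hF (hdeg 0)
    (mul_ne_zero hX.ne_zero hr0)
  refine ⟨h, hh0, ?_, fun q hq => hh _ hX (dvd_mul_right _ _) q fun p _ => hq p,
    fun g Q hg hQ hgQ q hq => hh g hg (Dvd.dvd.mul_left ?_ _) q hq⟩
  · have hpos : 1 ≤ F.totalDegree :=
      (Nat.one_le_iff_ne_zero.2 (hdeg 0)).trans (degreeOf_le_totalDegree F _)
    grw [hhdeg, totalDegree_mul, totalDegree_X, hrdeg]
    nlinarith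
  · obtain ⟨p₀, hp₀, hsec⟩ := exists_sectionAt_ne_zero hF (hdeg 0) hg
    obtain ⟨f, hf, hfdvd⟩ := exists_irreducible_forall_dvd (S := sectionAt F '' {p | eval p g = 0})
      (Set.forall_mem_image.2 fun p _ => totalDegree_sectionAt_le F p)
      (Set.mem_image_of_mem _ hp₀) hsec hQ
      (Set.forall_mem_image.2 fun p hp q hq => (eval_sectionAt F p q).trans (hgQ q hq p hp))
    refine hr g f hg hf fun p hp q hq => ?_
    rw [← eval_sectionAt]
    exact zero_dvd_iff.1 (hq ▸ map_dvd (eval q) (hfdvd _ (Set.mem_image_of_mem _ hp)))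

end ProductCurves

section PopularCurves

theorem rename_dvd_rename_iff {σ τ R : Type*} [CommRing R] (e : σ ≃ τ) {F H : MvPolynomial σ R} :
    rename e F ∣ rename e H ↔ F ∣ H :=
  map_dvd_iff (renameEquiv R e)

theorem irreducible_rename_iff {σ τ R : Type*} [CommRing R] (e : σ ≃ τ) {F : MvPolynomial σ R} :
    Irreducible (rename e F) ↔ Irreducible F :=
  MulEquiv.irreducible_iff (renameEquiv R e)

theorem pderiv_rename_ne_zero {σ τ R : Type*} [CommRing R] (e : σ ≃ τ) {F : MvPolynomial σ R}
    (h : ∀ i, pderiv i F ≠ 0) (i : τ) : pderiv i (rename e F) ≠ 0 := by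
  obtain ⟨j, rfl⟩ := e.surjective i
  rw [pderiv_rename e.injective]
  exact (rename_eq_zero_iff_of_injective _ e.injective).not.2 (h j)

theorem exists_curve_avoiding_popular {F : MvPolynomial (Fin 4) ℂ} (hF : Irreducible F)
    (hd : ∀ i, pderiv i F ≠ 0) (e : Fin 4 ≃ Fin 2 ⊕ Fin 2)
    (hobs : ¬F ∣ splittingObstruction (e.symm (.inl 0)) (e.symm (.inl 1)) (e.symm (.inr 0))
      (e.symm (.inr 1)) F) {Φ : ℂ × ℂ → ℂ × ℂ → ℂ}
    (hΦ : ∀ p q, Φ p q = eval (Sum.elim ![p.1, p.2] ![q.1, q.2] ∘ e) F) :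
    ∃ h : MvPolynomial (Fin 2) ℂ, h ≠ 0 ∧ (h.totalDegree : ℝ) ≤ 13 * (F.totalDegree : ℝ) ^ 4 ∧
      (∀ q, (∀ p, Φ p q = 0) → ev2 h q = 0) ∧
      ∀ (γ : Set (ℂ × ℂ)) (Q : Finset (ℂ × ℂ)), IsIrredCurve γ → F.totalDegree ^ 2 < Q.card →
        (∀ q ∈ Q, ∀ p ∈ γ, Φ p q = 0) → ∀ q, (∀ p ∈ γ, Φ p q = 0) → ev2 h q = 0 := by
  have hdeg : (rename e F).totalDegree = F.totalDegree := totalDegree_renameEquiv e F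
  obtain ⟨h, hh0, hhdeg, hhT, hh⟩ := exists_curve_of_not_dvd_splittingObstruction (i := 0) (j := 1)
    ((irreducible_rename_iff e).2 hF)
    (fun i => degreeOf_ne_zero_of_pderiv_ne_zero (pderiv_rename_ne_zero e hd _))
    (by simpa [← splittingObstruction_rename e.injective] using
      (rename_dvd_rename_iff e).not.2 hobs)
  simp only [← eval_rename] at hΦ
  rw [hdeg] at hhdeg
  rw [hdeg] at hh
  have hfin_two (p : Fin 2 → ℂ) : ![p 0, p 1] = p := (finTwoArrowEquiv ℂ).left_inv p
  refine ⟨h, hh0, ?_, fun q hq => hhT _ fun p => ?_, ?_⟩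
  · have hpow : F.totalDegree ^ 3 ≤ F.totalDegree ^ 4 :=
      Nat.pow_le_pow_right (totalDegree_pos_of_irreducible hF) (by norm_num)
    exact_mod_cast hhdeg.trans (Nat.mul_le_mul_left 13 hpow)
  · simpa only [hΦ, hfin_two] using hq (p 0, p 1)
  rintro _ Q ⟨g, hg, rfl⟩ hQ hγ q hq
  have hsection (q : ℂ × ℂ) (hq : ∀ p ∈ {p | ev2 g p = 0}, Φ p q = 0) (p : Fin 2 → ℂ)
      (hp : eval p g = 0) : eval (Sum.elim p ![q.1, q.2]) (rename e F) = 0 := by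
    simpa only [hΦ, hfin_two] using
      hq (p 0, p 1) (by rwa [Set.mem_ofPred_eq, ev2, hfin_two])
  refine hh g (Q.map (finTwoArrowEquiv ℂ).symm.toEmbedding) hg (by rwa [Finset.card_map])
    (fun q' hq' => ?_) _ (hsection q hq)
  obtain ⟨q, hqQ, rfl⟩ := Finset.mem_map.1 hq'
  exact hsection q (hγ q hqQ)

theorem goodSplit_of_not_dvd_splittingObstruction {F : MvPolynomial (Fin 4) ℂ}
    (hF : Irreducible F) (hd : ∀ i, pderiv i F ≠ 0)
    (hobs : ¬F ∣ splittingObstruction 0 1 2 3 F) : GoodSplit 13 F.totalDegree F := by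
  let e : Fin 4 ≃ Fin 2 ⊕ Fin 2 := (finSumFinEquiv (m := 2) (n := 2)).symm
  have he (p q : ℂ × ℂ) : Sum.elim ![p.1, p.2] ![q.1, q.2] ∘ e = ![p.1, p.2, q.1, q.2] := by
    ext i; fin_cases i <;> rfl
  have he_swap (p q : ℂ × ℂ) : Sum.elim ![p.1, p.2] ![q.1, q.2] ∘ e.trans (Equiv.sumComm _ _) =
      ![q.1, q.2, p.1, p.2] := by
    ext i; fin_cases i <;> rfl
  constructor
  · obtain ⟨h, hh0, hhdeg, hhT, hh⟩ := exists_curve_avoiding_popular hF hd e hobs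
      (Φ := fun p q => ev4 F p.1 p.2 q.1 q.2) fun p q => by rw [he, ev4]
    refine ⟨h, ∅, hh0, hhdeg, by simp,
      fun q hq => .inl (hhT q fun p => hq p.1 p.2), ?_⟩
    rintro q hq ⟨γ, ⟨hγ, Q, hQ, hγQ⟩, hγq⟩
    exact hq (.inl (hh γ Q hγ hQ (fun q' hq' => (hγQ q' hq').2) q hγq))
  · obtain ⟨h, hh0, hhdeg, hhS, hh⟩ := exists_curve_avoiding_popular hF hd
      (e.trans (Equiv.sumComm _ _)) (by rwa [← splittingObstruction_comm] at hobs)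
      (Φ := fun q p => ev4 F p.1 p.2 q.1 q.2) fun p q => by rw [he_swap, ev4]
    refine ⟨h, ∅, hh0, hhdeg, by simp,
      fun p hp => .inl (hhS p fun q => hp q.1 q.2), ?_⟩
    rintro p hp ⟨γ, ⟨hγ, P, hP, hγP⟩, hγp⟩
    exact hp (.inl (hh γ P hγ hP (fun p' hp' => (hγP p' hp').2) p hγp))

theorem goodSplit_rename_of_not_dvd_splittingObstruction {F : MvPolynomial (Fin 4) ℂ}
    (hF : Irreducible F) (hd : ∀ i, pderiv i F ≠ 0) {σ : Equiv.Perm (Fin 4)}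
    (hσ : Function.Involutive σ)
    (hobs : ¬F ∣ splittingObstruction (σ 0) (σ 1) (σ 2) (σ 3) F) :
    GoodSplit 13 F.totalDegree (rename σ F) := by
  rw [← totalDegree_renameEquiv σ F]
  refine goodSplit_of_not_dvd_splittingObstruction ((irreducible_rename_iff σ).2 hF)
    (pderiv_rename_ne_zero σ hd) ?_
  rwa [← rename_dvd_rename_iff σ, ← splittingObstruction_rename σ.injective, hσ, hσ, hσ, hσ]
    at hobs

end PopularCurves

section Dimension

theorem IsIrredAlgSet.isPrime_vanishingIdeal {n : ℕ} {S : Set (Fin n → ℂ)}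
    (hS : IsIrredAlgSet S) : (vanishingIdeal ℂ S).IsPrime := by
  obtain ⟨⟨I, rfl⟩, ⟨p₀, hp₀⟩, hirr⟩ := hS
  refine ⟨fun htop => ?_, fun {f g} hfg => ?_⟩
  · have := (mem_vanishingIdeal_iff (k := ℂ)).1
      (htop ▸ Submodule.mem_top (x := (1 : MvPolynomial (Fin n) ℂ))) p₀ hp₀
    simp at this
  simp only [mem_vanishingIdeal_iff, aeval_eq_eval, map_mul, mul_eq_zero] at hfg ⊢
  have heval (f : MvPolynomial (Fin n) ℂ) (hf : zeroSetOf I = zeroSetOf (insert f I)) :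
      ∀ p ∈ zeroSetOf I, eval p f = 0 :=
    fun p hp => (hf ▸ hp : p ∈ zeroSetOf (insert f I)) f (Set.mem_insert f I)
  refine (hirr _ _ ⟨insert f I, rfl⟩ ⟨insert g I, rfl⟩ ?_).imp (heval f) (heval g)
  ext p
  simp only [zeroSetOf, Set.mem_union, Set.mem_ofPred_eq, Set.forall_mem_insert]
  rw [← or_and_right]
  exact (and_iff_right_of_imp (hfg p)).symm

theorem IsAlgSet.vanishingIdeal_lt_of_ssubset {n : ℕ} {S T : Set (Fin n → ℂ)} (hS : IsAlgSet S)
    (h : S ⊂ T) : vanishingIdeal ℂ T < vanishingIdeal ℂ S := by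
  obtain ⟨I, rfl⟩ := hS
  refine lt_of_le_not_ge (vanishingIdeal_anti_mono h.1) fun hle => h.2 fun p hp f hf => ?_
  simpa [aeval_eq_eval] using hle (mem_vanishingIdeal_iff.2 fun q hq => by
    simpa [aeval_eq_eval] using hq f hf) p hp

theorem algDimLE_zeroSetOf_pair {d : ℕ} {F H : MvPolynomial (Fin (d + 2)) ℂ} (hF : Irreducible F)
    (hFH : ¬F ∣ H) : algDimLE (zeroSetOf {F, H}) d := by
  intro Z hZ hmono
  have hmem (G) (hG : G ∈ ({F, H} : Set (MvPolynomial (Fin (d + 2)) ℂ))) (i) :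
      G ∈ vanishingIdeal ℂ (Z i) := mem_vanishingIdeal_iff.2 fun p hp => by
    simpa [aeval_eq_eval] using (hZ i).2 hp G hG
  let zero : PrimeSpectrum (MvPolynomial (Fin (d + 2)) ℂ) := ⟨⊥, Ideal.isPrime_bot⟩
  let principal : PrimeSpectrum (MvPolynomial (Fin (d + 2)) ℂ) :=
    ⟨Ideal.span {F}, (Ideal.span_singleton_prime hF.ne_zero).2 hF.prime⟩
  let chain : LTSeries (PrimeSpectrum (MvPolynomial (Fin (d + 2)) ℂ)) :=
    LTSeries.mk (d + 1) (fun i => ⟨vanishingIdeal ℂ (Z i.rev), (hZ i.rev).1.isPrime_vanishingIdeal⟩)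
      fun i j hij => (hZ j.rev).1.1.vanishingIdeal_lt_of_ssubset (hmono (Fin.rev_lt_rev.2 hij))
  have hprincipal : principal < chain.head := by
    refine lt_of_le_not_ge ((Ideal.span_singleton_le_iff_mem _).2 (hmem F (by simp) _))
      fun hle => ?_
    exact hFH (Ideal.mem_span_singleton.1 (hle (hmem H (by simp) _)))
  have hzero : zero < principal := (bot_lt_iff_ne_bot.2 fun h =>
    hF.ne_zero (Ideal.span_singleton_eq_bot.1 h) : (⊥ : Ideal _) < Ideal.span {F})
  have hlen := Order.LTSeries.length_le_krullDim ((chain.cons principal hprincipal).cons zero hzero)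
  change _ ≤ ringKrullDim (MvPolynomial (Fin (d + 2)) ℂ) at hlen
  rw [MvPolynomial.ringKrullDim_of_isNoetherianRing, ringKrullDim_eq_zero_of_field, zero_add,
    Nat.card_fin, Nat.cast_le] at hlen
  have hlen_eq := (RelSeries.cons_length (chain.cons principal hprincipal) zero hzero).trans
    (congrArg (· + 1) (RelSeries.cons_length chain principal hprincipal))
  have : chain.length = d + 1 := rfl
  omega

theorem algDimLE_zeroSetOf_prod_pderiv {d : ℕ} {F : MvPolynomial (Fin (d + 2)) ℂ}
    (hF : Irreducible F) (hd : ∀ i, pderiv i F ≠ 0) :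
    algDimLE (zeroSetOf {F, ∏ i, pderiv i F}) d := by
  refine algDimLE_zeroSetOf_pair hF fun hdvd => ?_
  obtain ⟨i, -, hi⟩ := hF.prime.exists_mem_finset_dvd hdvd
  exact not_dvd_pderiv (hd i) hi

end Dimension

section Retraction

variable {ι : Type*} [Fintype ι]

theorem hasFDerivAt_eval (G : MvPolynomial ι ℂ) (w : ι → ℂ) :
    HasFDerivAt (fun w => eval w G)
      (∑ m, eval w (pderiv m G) • ContinuousLinearMap.proj (R := ℂ) (φ := fun _ : ι => ℂ) m) w := by
  classical
  induction G using MvPolynomial.induction_on with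
  | C a =>
    simp only [eval_C]
    refine (hasFDerivAt_const a w).congr_fderiv ?_
    ext d
    simp
  | add p q hp hq =>
    simp only [map_add]
    refine (hp.add hq).congr_fderiv ?_
    ext d
    simp [add_mul, Finset.sum_add_distrib]
  | mul_X p m hp =>
    simp only [map_mul, eval_X]
    refine (hp.mul (hasFDerivAt_apply m w)).congr_fderiv ?_
    ext d
    simp [pderiv_X, Pi.single_apply, add_mul, Finset.sum_add_distrib, Finset.mul_sum, mul_assoc,
      apply_ite]

/-- The map straightening the zero set of `F` near a point where `F_l ≠ 0` to the coordinate
hyperplane `w l = 0`. -/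
def straightening {ι : Type*} [DecidableEq ι] (F : MvPolynomial ι ℂ) (l : ι) (w : ι → ℂ) : ι → ℂ :=
  Function.update w l (eval w F)

theorem straightening_eq_update_zero {ι : Type*} [DecidableEq ι] {F : MvPolynomial ι ℂ} {l : ι}
    {w : ι → ℂ} (hw : eval w F = 0) : straightening F l w = Function.update w l 0 := by
  rw [straightening, hw]

theorem contDiff_straightening [DecidableEq ι] (F : MvPolynomial ι ℂ) (l : ι) :
    ContDiff ℂ 1 (straightening F l) := by
  refine contDiff_pi.2 fun m => ?_
  obtain rfl | hm := eq_or_ne m l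
  · simpa [straightening] using
      (AnalyticOnNhd.eval_mvPolynomial (𝕜 := ℂ) F).contDiff
  · simpa [straightening, hm] using contDiff_apply ℂ ℂ m

theorem exists_hasFDerivAt_straightening {ι : Type*} [Finite ι] [DecidableEq ι]
    {F : MvPolynomial ι ℂ} {v : ι → ℂ} {l : ι} (hl : eval v (pderiv l F) ≠ 0) :
    ∃ e : (ι → ℂ) ≃L[ℂ] ι → ℂ, HasFDerivAt (straightening F l) (e : (ι → ℂ) →L[ℂ] ι → ℂ) v := by
  let : Fintype ι := Fintype.ofFinite ι
  let D : (ι → ℂ) →L[ℂ] ι → ℂ := ContinuousLinearMap.pi fun m =>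
    if m = l then ∑ k, eval v (pderiv k F) • ContinuousLinearMap.proj k
    else ContinuousLinearMap.proj m
  have hD : HasFDerivAt (straightening F l) D v := by
    refine hasFDerivAt_pi.2 fun m => ?_
    obtain rfl | hm := eq_or_ne m l
    · simpa [straightening] using hasFDerivAt_eval F v
    · simpa [straightening, hm] using hasFDerivAt_apply m v
  have hinj : Function.Injective D := by
    refine (injective_iff_map_eq_zero D).2 fun d hd => ?_
    have hdm (m) (hm : m ≠ l) : d m = 0 := by simpa [D, hm] using congrFun hd m
    have hdl : ∑ k, eval v (pderiv k F) * d k = 0 := by simpa [D] using congrFun hd l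
    rw [Finset.sum_eq_single l (fun m _ hm => by rw [hdm m hm, mul_zero]) (by simp)] at hdl
    funext m
    obtain rfl | hm := eq_or_ne m l
    exacts [(mul_eq_zero.1 hdl).resolve_left hl, hdm m hm]
  exact ⟨(LinearEquiv.ofInjectiveEndo D.toLinearMap hinj).toContinuousLinearEquiv, hD⟩

theorem exists_retraction {ι : Type*} [Finite ι] {F : MvPolynomial ι ℂ} {v : ι → ℂ} {l : ι}
    (hv : eval v F = 0) (hl : eval v (pderiv l F) ≠ 0) :
    ∃ Q : (ι → ℂ) → ι → ℂ, Filter.Tendsto Q (𝓝 v) (𝓝 v) ∧ ∀ᶠ w in 𝓝 v, DifferentiableAt ℂ Q w ∧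
      eval (Q w) F = 0 ∧ (∀ m ≠ l, Q w m = w m) ∧ (eval w F = 0 → Q w = w) := by
  classical
  let : Fintype ι := Fintype.ofFinite ι
  obtain ⟨e, he⟩ := exists_hasFDerivAt_straightening hl
  have hs := (contDiff_straightening F l).contDiffAt (x := v)
  have hv0 := straightening_eq_update_zero (l := l) hv
  have hupd : Differentiable ℂ fun w : ι → ℂ => Function.update w l 0 := by
    refine differentiable_pi.2 fun m => ?_
    obtain rfl | hm := eq_or_ne m l
    · simp
    · simpa [hm] using differentiable_apply m
  have htend : Filter.Tendsto (fun w : ι → ℂ => Function.update w l 0) (𝓝 v)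
      (𝓝 (straightening F l v)) := hv0 ▸ hupd.continuous.tendsto v
  let inv := hs.localInverse he one_ne_zero
  have hleft : ∀ᶠ w in 𝓝 v, inv (straightening F l w) = w :=
    (hs.hasStrictFDerivAt' he one_ne_zero).eventually_left_inverse
  have hright : ∀ᶠ w in 𝓝 (straightening F l v), straightening F l (inv w) = w :=
    (hs.hasStrictFDerivAt' he one_ne_zero).eventually_right_inverse
  have hdiff : ∀ᶠ w in 𝓝 (straightening F l v), DifferentiableAt ℂ inv w :=
    ((hs.to_localInverse he one_ne_zero).eventually (by simp)).mono
      fun w hw => hw.differentiableAt one_ne_zero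
  have hinv : Filter.Tendsto inv (𝓝 (straightening F l v)) (𝓝 v) := by
    simpa only [ContinuousAt, hleft.self_of_nhds] using hdiff.self_of_nhds.continuousAt
  refine ⟨fun w => inv (Function.update w l 0), hinv.comp htend, ?_⟩
  filter_upwards [hleft, htend.eventually hright, htend.eventually hdiff] with w hw₁ hw₂ hw₃
  refine ⟨hw₃.comp w (hupd w), ?_, fun m hm => ?_, fun hw => ?_⟩
  · simpa [straightening] using congrFun hw₂ l
  · simpa [straightening, hm] using congrFun hw₂ m
  · rw [← straightening_eq_update_zero hw, hw₁]

end Retraction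

section LocalConstancy

variable {ι : Type*} [Fintype ι]

theorem eq_of_tangent_derivative_eq_zero {F : MvPolynomial ι ℂ} {v : ι → ℂ} {l : ι}
    (hv : eval v F = 0) (hl : eval v (pderiv l F) ≠ 0) {S : Set ι} (hlS : l ∉ S)
    {G : (ι → ℂ) → ℂ} {G' : (ι → ℂ) → (ι → ℂ) →L[ℂ] ℂ} (hG : ∀ᶠ w in 𝓝 v, HasFDerivAt G (G' w) w)
    (hG' : ∀ᶠ w in 𝓝 v, eval w F = 0 → ∀ d : ι → ℂ, (∀ i ∈ S, d i = 0) →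
      ∑ m, eval w (pderiv m F) * d m = 0 → G' w d = 0) :
    ∃ U ∈ 𝓝 v, ∀ w ∈ U, ∀ w' ∈ U, eval w F = 0 → eval w' F = 0 → (∀ i ∈ S, w i = w' i) →
      G w = G w' := by
  obtain ⟨Q, hQv, hQ⟩ := exists_retraction hv hl
  obtain ⟨ε, hε, hball⟩ := Metric.eventually_nhds_iff_ball.1
    (hQ.and (hQv.eventually (hG.and hG')))
  refine ⟨_, Metric.ball_mem_nhds v hε, fun w hw w' hw' hwF hw'F hS => ?_⟩
  let line : ℂ → ι → ℂ := fun u => w + u • (w' - w)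
  have hline (u : ℂ) : HasDerivAt line (w' - w) u := by
    simpa [line] using ((hasDerivAt_id u).smul_const (w' - w)).const_add w
  have hopen : IsOpen (line ⁻¹' Metric.ball v ε) :=
    Metric.isOpen_ball.preimage (continuous_iff_continuousAt.2 fun u => (hline u).continuousAt)
  have hconvex : Convex ℝ (line ⁻¹' Metric.ball v ε) :=
    ((convex_ball v ε).translate_preimage_right w).linear_preimage
      ((LinearMap.toSpanSingleton ℂ _ (w' - w)).restrictScalars ℝ)
  have hderiv : ∀ u ∈ line ⁻¹' Metric.ball v ε, HasDerivAt (G ∘ Q ∘ line) 0 u := by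
    intro u hu
    obtain ⟨⟨hQd, hQF, -, -⟩, hGd, hG0⟩ := hball _ hu
    have hnear : ∀ᶠ z in 𝓝 u, line z ∈ Metric.ball v ε := hopen.mem_nhds hu
    have hc := hQd.hasFDerivAt.comp_hasDerivAt u (hline u)
    refine (hGd.comp_hasDerivAt u hc).congr_deriv (hG0 hQF _ (fun i hi => ?_) ?_)
    · refine (hasDerivAt_pi.1 hc i).unique ((hasDerivAt_const u (w i)).congr_of_eventuallyEq ?_)
      filter_upwards [hnear] with z hz
      rw [Function.comp_apply, (hball _ hz).1.2.2.1 i (ne_of_mem_of_not_mem hi hlS)]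
      simp [line, hS i hi]
    · have hFc := (hasFDerivAt_eval F _).comp_hasDerivAt u hc
      simpa using hFc.unique ((hasDerivAt_const u (0 : ℂ)).congr_of_eventuallyEq
        (hnear.mono fun z hz => (hball _ hz).1.2.1))
  have hconst := hopen.is_const_of_deriv_eq_zero hconvex.isPreconnected
    (fun u hu => (hderiv u hu).differentiableAt.differentiableWithinAt)
    (fun u hu => (hderiv u hu).deriv) (x := 0) (y := 1)
    (by simpa [line] using hw) (by simpa [line] using hw')
  simpa [line, (hball w hw).1.2.2.2 hwF, (hball w' hw').1.2.2.2 hw'F] using hconst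

end LocalConstancy

section Separation

variable {ι : Type*} [Fintype ι]

theorem exists_ne_ne_of_two_lt_card (hcard : 2 < Fintype.card ι) (i j : ι) :
    ∃ l, l ≠ i ∧ l ≠ j :=
  ENat.exists_ne_ne_of_three_le (by simpa [Nat.succ_le_iff] using hcard) i j

theorem hasFDerivAt_eval_div_eval (G : MvPolynomial ι ℂ) {H : MvPolynomial ι ℂ} {w : ι → ℂ}
    (hH : eval w H ≠ 0) :
    HasFDerivAt (fun w => eval w G / eval w H) ((eval w H ^ 2)⁻¹ • ∑ m,
      eval w (H * pderiv m G - G * pderiv m H) •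
        ContinuousLinearMap.proj (R := ℂ) (φ := fun _ : ι => ℂ) m) w := by
  simp only [div_eq_mul_inv]
  refine ((hasFDerivAt_eval G w).mul
    ((hasDerivAt_inv hH).comp_hasFDerivAt w (hasFDerivAt_eval H w))).congr_fderiv ?_
  ext d
  simp only [Function.comp_apply, add_apply, smul_apply, sum_apply, smul_eq_mul, neg_mul, mul_neg,
    ContinuousLinearMap.proj_apply, map_sub, map_mul, sub_mul, mul_assoc, Finset.sum_sub_distrib,
    ← Finset.mul_sum]
  field_simp
  ring

theorem exists_pderiv_mul_pderiv_eq_of_dvd {ι : Type*} [Finite ι] {F : MvPolynomial ι ℂ}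
    {v : ι → ℂ} {i j l : ι} (hv : eval v F = 0) (hj : eval v (pderiv j F) ≠ 0)
    (hl : eval v (pderiv l F) ≠ 0) (hli : l ≠ i) (hlj : l ≠ j)
    (hobs : ∀ k, k ≠ i → k ≠ j → F ∣ splittingObstruction i j k l F) :
    ∃ U ∈ 𝓝 v, ∀ p ∈ U, ∀ q ∈ U, eval p F = 0 → eval q F = 0 → p i = q i → p j = q j →
      eval p (pderiv i F) * eval q (pderiv j F) = eval q (pderiv i F) * eval p (pderiv j F) := by
  let : Fintype ι := Fintype.ofFinite ι
  have hne (m) (hm : eval v (pderiv m F) ≠ 0) : ∀ᶠ w in 𝓝 v, eval w (pderiv m F) ≠ 0 :=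
    (continuous_eval (pderiv m F)).continuousAt.eventually_ne hm
  have htangent : ∀ᶠ w in 𝓝 v, eval w F = 0 → ∀ d : ι → ℂ,
      (∀ m ∈ ({i, j} : Set ι), d m = 0) → ∑ m, eval w (pderiv m F) * d m = 0 →
      ∑ m, eval w (pderivRatioNum i j m F) * d m = 0 := by
    filter_upwards [hne l hl] with w hw hwF d hd hFd
    refine (mul_eq_zero.1 ?_).resolve_left hw
    suffices h : ∀ m, eval w (pderiv l F) * (eval w (pderivRatioNum i j m F) * d m) =
        eval w (pderivRatioNum i j l F) * (eval w (pderiv m F) * d m) by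
      rw [Finset.mul_sum, Finset.sum_congr rfl fun m _ => h m, ← Finset.mul_sum, hFd, mul_zero]
    intro m
    by_cases hm : m = i ∨ m = j
    · simp [hd m hm]
    rw [not_or] at hm
    obtain ⟨c, hc⟩ := hobs m hm.1 hm.2
    have hzero := congrArg (eval w) hc
    simp only [splittingObstruction, map_sub, map_mul, hwF, zero_mul] at hzero
    linear_combination d m * hzero
  obtain ⟨U, hU, hconst⟩ := eq_of_tangent_derivative_eq_zero (S := {i, j}) hv hl
    (by simp [hli, hlj]) ((hne j hj).mono fun w hw => hasFDerivAt_eval_div_eval (pderiv i F) hw)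
    (htangent.mono fun w hw hwF d hd hFd => by
      simpa [pderivRatioNum] using Or.inr (hw hwF d hd hFd))
  refine ⟨_, Filter.inter_mem hU (hne j hj), fun p hp q hq hpF hqF hi hj => ?_⟩
  exact (div_eq_div_iff hp.2 hq.2).1 (hconst p hp.1 q hq.1 hpF hqF (by simp [hi, hj]))

theorem eventually_exists_zero {F : MvPolynomial ι ℂ} {v : ι → ℂ} (hv : eval v F = 0)
    (hd : ∀ i, eval v (pderiv i F) ≠ 0) {U : Set (ι → ℂ)} (hU : U ∈ 𝓝 v) (S T : Finset ι)
    [DecidableEq ι] (hT : T.card < Fintype.card ι) :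
    ∀ᶠ w in 𝓝 v, ∃ p ∈ U, eval p F = 0 ∧ ∀ m ∈ T, p m = S.piecewise w v m := by
  obtain ⟨l, -, hl⟩ := Finset.exists_mem_notMem_of_card_lt_card (Finset.card_univ (α := ι) ▸ hT)
  obtain ⟨Q, hQv, hQ⟩ := exists_retraction hv (hd l)
  have hcont : Filter.Tendsto (fun w : ι → ℂ => S.piecewise w v) (𝓝 v) (𝓝 v) := by
    have : Continuous fun w : ι → ℂ => S.piecewise w v := by
      refine continuous_pi fun m => ?_
      by_cases hm : m ∈ S
      · simpa [hm] using continuous_apply m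
      · simpa [hm] using continuous_const
    simpa only [Finset.piecewise_same] using this.tendsto v
  filter_upwards [hcont.eventually (hQ.and (hQv.eventually_mem hU))] with w ⟨hw, hwU⟩
  exact ⟨_, hwU, hw.2.1, fun m hm => hw.2.2.1 m (ne_of_mem_of_not_mem hm hl)⟩

/-- On the zeros of `F` in `U`, the ratio of `F_i` and `F_j` is a function of the coordinates `i`
and `j`. It is stated without division, so that `i = j` needs no separate treatment. -/
def HasBinaryRatiosOn (F : MvPolynomial ι ℂ) (U : Set (ι → ℂ)) : Prop :=
  ∀ p ∈ U, ∀ q ∈ U, eval p F = 0 → eval q F = 0 → ∀ i j, p i = q i → p j = q j →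
    eval p (pderiv i F) * eval q (pderiv j F) = eval q (pderiv i F) * eval p (pderiv j F)

theorem exists_hasBinaryRatiosOn {F : MvPolynomial ι ℂ} {v : ι → ℂ} (hcard : 2 < Fintype.card ι)
    (hv : eval v F = 0) (hd : ∀ i, eval v (pderiv i F) ≠ 0)
    (hobs : ∀ i j k l, [i, j, k, l].Nodup → F ∣ splittingObstruction i j k l F) :
    ∃ U ∈ 𝓝 v, HasBinaryRatiosOn F U ∧ ∀ w ∈ U, ∀ i, eval w (pderiv i F) ≠ 0 := by
  classical
  have hpair (i j : ι) : ∃ U ∈ 𝓝 v, ∀ p ∈ U, ∀ q ∈ U, eval p F = 0 → eval q F = 0 → p i = q i →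
      p j = q j →
      eval p (pderiv i F) * eval q (pderiv j F) = eval q (pderiv i F) * eval p (pderiv j F) := by
    obtain rfl | hij := eq_or_ne i j
    · exact ⟨Set.univ, Filter.univ_mem, fun _ _ _ _ _ _ _ _ => mul_comm _ _⟩
    obtain ⟨l, hli, hlj⟩ := exists_ne_ne_of_two_lt_card hcard i j
    refine exists_pderiv_mul_pderiv_eq_of_dvd hv (hd j) (hd l) hli hlj fun k hki hkj => ?_
    obtain rfl | hkl := eq_or_ne k l
    · simp [splittingObstruction]
    · exact hobs i j k l (by grind)
  choose U hU hUF using hpair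
  refine ⟨(⋂ i, ⋂ j, U i j) ∩ {w | ∀ i, eval w (pderiv i F) ≠ 0}, Filter.inter_mem
    (Filter.iInter_mem.2 fun i => Filter.iInter_mem.2 fun j => hU i j)
    (Filter.eventually_all.2 fun i =>
      (continuous_eval (pderiv i F)).continuousAt.eventually_ne (hd i)), ?_, fun w hw => hw.2⟩
  intro p hp q hq hpF hqF i j
  exact hUF i j p (Set.mem_iInter₂.1 hp.1 i j) q (Set.mem_iInter₂.1 hq.1 i j) hpF hqF

theorem exists_path_of_mem_nhds {F : MvPolynomial ι ℂ} {v : ι → ℂ} {U : Set (ι → ℂ)} {i j : ι}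
    (hcard : 2 < Fintype.card ι) (hv : eval v F = 0) (hd : ∀ i, eval v (pderiv i F) ≠ 0)
    (hU : U ∈ 𝓝 v) (hji : j ≠ i) :
    ∃ P : ℂ → ι → ℂ, ∀ᶠ z in 𝓝 (v i), DifferentiableAt ℂ P z ∧ P z ∈ U ∧ eval (P z) F = 0 ∧
      P z i = z ∧ P z j = v j := by
  classical
  obtain ⟨l, hli, hlj⟩ := exists_ne_ne_of_two_lt_card hcard i j
  obtain ⟨Q, hQv, hQ⟩ := exists_retraction hv (hd l)
  have hupd : Filter.Tendsto (Function.update v i) (𝓝 (v i)) (𝓝 v) := by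
    simpa using (hasFDerivAt_update (𝕜 := ℂ) v (i := i) (v i)).continuousAt.tendsto
  refine ⟨fun z => Q (Function.update v i z), ?_⟩
  filter_upwards [hupd.eventually (hQ.and (hQv.eventually_mem hU))] with z hz
  refine ⟨hz.1.1.comp z (hasFDerivAt_update v z).differentiableAt, hz.2, hz.1.2.1, ?_, ?_⟩
  · simpa using hz.1.2.2.1 i hli.symm
  · simpa [hji] using hz.1.2.2.1 j hlj.symm

theorem exists_separating_function {F : MvPolynomial ι ℂ} {v : ι → ℂ} {U : Set (ι → ℂ)}
    (hcard : 3 < Fintype.card ι) (hv : eval v F = 0) (hU : U ∈ 𝓝 v) (hUF : HasBinaryRatiosOn F U)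
    (hne : ∀ w ∈ U, ∀ i, eval w (pderiv i F) ≠ 0) (i : ι) :
    ∃ α : ℂ → ℂ, (∀ᶠ z in 𝓝 (v i), DifferentiableAt ℂ α z) ∧ α (v i) ≠ 0 ∧
      ∀ k ≠ i, ∀ᶠ w in 𝓝 v, eval w F = 0 → w k = v k →
        eval w (pderiv i F) * eval v (pderiv k F) = α (w i) * eval w (pderiv k F) := by
  classical
  have hvU := mem_of_mem_nhds hU
  obtain ⟨j, hji⟩ : ∃ j, j ≠ i := Fintype.exists_ne_of_one_lt_card (by omega) i
  obtain ⟨P, hP⟩ := exists_path_of_mem_nhds (by omega) hv (hne v hvU) hU hji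
  refine ⟨fun z => eval v (pderiv j F) * (eval (P z) (pderiv i F) / eval (P z) (pderiv j F)),
    ?_, ?_, fun k hki => ?_⟩
  · filter_upwards [hP] with z ⟨hz, hzU, _⟩
    exact ((hasFDerivAt_eval_div_eval _ (hne _ hzU j)).differentiableAt.comp z hz).const_mul _
  · have hPU := hP.self_of_nhds.2.1
    exact mul_ne_zero (hne v hvU j) (div_ne_zero (hne _ hPU i) (hne _ hPU j))
  filter_upwards [((continuous_apply i).tendsto v).eventually hP, hU, eventually_exists_zero hv
    (hne v hvU) hU {i} {i, k, j} (Finset.card_le_three.trans_lt hcard)]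
    with w ⟨_, hPU, hPF, hPi, hPj⟩ hwU ⟨q, hqU, hqF, hq⟩ hwF hwk
  have hqi : q i = w i := by simpa using hq i
  have hqk : q k = v k := by simpa [hki] using hq k
  have hqj : q j = v j := by simpa [hji] using hq j
  have hPj0 := hne _ hPU j
  have h₁ := hUF w hwU q hqU hwF hqF i k hqi.symm (hwk.trans hqk.symm)
  have h₂ := hUF _ hPU q hqU hPF hqF i j (hPi.trans hqi.symm) (hPj.trans hqj.symm)
  have h₃ := hUF v hvU q hqU hv hqF k j hqk.symm hqj.symm
  refine mul_right_cancel₀ (hne q hqU j) ?_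
  field_simp
  linear_combination eval w (pderiv i F) * eval (P (w i)) (pderiv j F) * h₃ +
    eval v (pderiv j F) * eval (P (w i)) (pderiv j F) * h₁ -
    eval w (pderiv k F) * eval v (pderiv j F) * h₂

theorem exists_separated_gradient {F : MvPolynomial ι ℂ} {v : ι → ℂ} (hcard : 3 < Fintype.card ι)
    (hv : eval v F = 0) (hd : ∀ i, eval v (pderiv i F) ≠ 0)
    (hobs : ∀ i j k l, [i, j, k, l].Nodup → F ∣ splittingObstruction i j k l F) :
    ∃ α : ι → ℂ → ℂ, (∀ m, ∀ᶠ z in 𝓝 (v m), DifferentiableAt ℂ (α m) z) ∧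
      (∀ m, α m (v m) ≠ 0) ∧ ∀ᶠ w in 𝓝 v, eval w F = 0 →
        ∀ i j, eval w (pderiv i F) * α j (w j) = eval w (pderiv j F) * α i (w i) := by
  classical
  obtain ⟨U, hU, hUF, hne⟩ := exists_hasBinaryRatiosOn (by omega) hv hd hobs
  choose α hα hα0 hαF using exists_separating_function hcard hv hU hUF hne
  refine ⟨α, hα, hα0, ?_⟩
  suffices h : ∀ i j, ∀ᶠ w in 𝓝 v, eval w F = 0 →
      eval w (pderiv i F) * α j (w j) = eval w (pderiv j F) * α i (w i) by
    filter_upwards [Filter.eventually_all.2 fun i => Filter.eventually_all.2 (h i)] with w hw hwF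
    exact fun i j => hw i j hwF
  intro i j
  obtain ⟨k, hki, hkj⟩ := exists_ne_ne_of_two_lt_card (by omega) i j
  filter_upwards [hU, eventually_exists_zero hv hd
    (Filter.inter_mem hU (Filter.inter_mem (hαF i k hki) (hαF j k hkj))) {i, j} {i, j, k}
    (Finset.card_le_three.trans_lt hcard)] with w hwU ⟨p, ⟨hpU, hpi, hpj⟩, hpF, hp⟩ hwF
  have hpwi : p i = w i := by simpa using hp i
  have hpwj : p j = w j := by simpa using hp j
  have hpk : p k = v k := by simpa [hki, hkj] using hp k
  have hwp := hUF w hwU p hpU hwF hpF i j hpwi.symm hpwj.symm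
  have hαi := hpi hpF hpk
  have hαj := hpj hpF hpk
  rw [hpwi] at hαi
  rw [hpwj] at hαj
  refine mul_right_cancel₀ (hne p hpU k) ?_
  linear_combination eval v (pderiv k F) * hwp + eval w (pderiv j F) * hαi -
    eval w (pderiv i F) * hαj

end Separation

section SumForm

theorem exists_analytic_left_inverse {φ : ℂ → ℂ} {z₀ : ℂ} (hφ : AnalyticAt ℂ φ z₀)
    (hφ' : deriv φ z₀ ≠ 0) :
    ∃ ψ : ℂ → ℂ, ∀ᶠ z in 𝓝 z₀, AnalyticAt ℂ φ z ∧ AnalyticAt ℂ ψ (φ z) ∧ ψ (φ z) = z := by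
  have hψ := (hφ.analyticAt_localInverse hφ').eventually_analyticAt
  exact ⟨hφ.hasStrictDerivAt.localInverse _ _ _ hφ', hφ.eventually_analyticAt.and
    ((hφ.continuousAt.eventually hψ).and (HasStrictDerivAt.eventually_left_inverse ..))⟩

theorem exists_primitive_with_left_inverse {α : ℂ → ℂ} {z₀ : ℂ}
    (hα : ∀ᶠ z in 𝓝 z₀, DifferentiableAt ℂ α z) (hα0 : α z₀ ≠ 0) :
    ∃ φ ψ : ℂ → ℂ, φ z₀ = 0 ∧ (∀ᶠ z in 𝓝 z₀, HasDerivAt φ (α z) z) ∧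
      ∀ᶠ z in 𝓝 z₀, AnalyticAt ℂ φ z ∧ AnalyticAt ℂ ψ (φ z) ∧ ψ (φ z) = z := by
  obtain ⟨r, hr, hαr⟩ := Metric.eventually_nhds_iff_ball.1 hα
  have hαd : DifferentiableOn ℂ α (Metric.ball z₀ r) := fun z hz =>
    (hαr z hz).differentiableWithinAt
  obtain ⟨φ, hφ0, hφ⟩ := hαd.isExactOn_ball.with_val_at z₀ 0
  have hball : Metric.ball z₀ r ∈ 𝓝 z₀ := Metric.ball_mem_nhds z₀ hr
  have hφa : AnalyticAt ℂ φ z₀ := DifferentiableOn.analyticAt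
    (fun z hz => (hφ z hz).differentiableAt.differentiableWithinAt) hball
  obtain ⟨ψ, hψ⟩ := exists_analytic_left_inverse hφa
    (by rwa [(hφ z₀ (Metric.mem_ball_self hr)).deriv])
  exact ⟨φ, ψ, hφ0, Filter.eventually_of_mem hball hφ, hψ⟩

variable {ι : Type*} [Fintype ι]

theorem eventually_sum_primitive_eq_zero {F : MvPolynomial ι ℂ} {v : ι → ℂ} {l : ι}
    {α φ : ι → ℂ → ℂ} (hv : eval v F = 0) (hl : eval v (pderiv l F) ≠ 0)
    (hφv : ∀ m, φ m (v m) = 0) (hφ : ∀ m, ∀ᶠ z in 𝓝 (v m), HasDerivAt (φ m) (α m z) z)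
    (hα : ∀ᶠ w in 𝓝 v, eval w F = 0 →
      ∀ m, eval w (pderiv l F) * α m (w m) = eval w (pderiv m F) * α l (w l)) :
    ∀ᶠ w in 𝓝 v, eval w F = 0 → ∑ m, φ m (w m) = 0 := by
  have hderiv : ∀ᶠ w in 𝓝 v, HasFDerivAt (fun w : ι → ℂ => ∑ m, φ m (w m))
      (∑ m, α m (w m) • ContinuousLinearMap.proj (R := ℂ) (φ := fun _ : ι => ℂ) m) w := by
    filter_upwards [Filter.eventually_all.2 fun m =>
      ((continuous_apply m).tendsto v).eventually (hφ m)] with w hw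
    exact HasFDerivAt.fun_sum fun m _ =>
      (hw m).comp_hasFDerivAt w (hasFDerivAt_apply (𝕜 := ℂ) m w)
  have htangent : ∀ᶠ w in 𝓝 v, eval w F = 0 → ∀ d : ι → ℂ,
      ∑ m, eval w (pderiv m F) * d m = 0 → ∑ m, α m (w m) * d m = 0 := by
    filter_upwards [hα, (continuous_eval (pderiv l F)).continuousAt.eventually_ne hl]
      with w hw hwl hwF d hFd
    refine (mul_eq_zero.1 ?_).resolve_left hwl
    calc eval w (pderiv l F) * ∑ m, α m (w m) * d m
        = ∑ m, α l (w l) * (eval w (pderiv m F) * d m) := by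
          rw [Finset.mul_sum]
          exact Finset.sum_congr rfl fun m _ => by linear_combination d m * hw hwF m
      _ = 0 := by rw [← Finset.mul_sum, hFd, mul_zero]
  obtain ⟨U, hU, hconst⟩ := eq_of_tangent_derivative_eq_zero hv hl (Set.notMem_empty l) hderiv
    (htangent.mono fun w hw hwF d _ hFd => by simpa using hw hwF d hFd)
  filter_upwards [hU] with w hw hwF
  simpa [hφv] using hconst w hw v (mem_of_mem_nhds hU) hwF hv (by simp)

theorem eventually_eval_eq_zero_of_sum_eq_zero {F : MvPolynomial ι ℂ} {v : ι → ℂ} {l : ι}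
    {φ : ι → ℂ → ℂ} {ψ : ℂ → ℂ} (hv : eval v F = 0) (hl : eval v (pderiv l F) ≠ 0)
    (hψ : ∀ᶠ z in 𝓝 (v l), ψ (φ l z) = z)
    (hsum : ∀ᶠ w in 𝓝 v, eval w F = 0 → ∑ m, φ m (w m) = 0) :
    ∀ᶠ w in 𝓝 v, ∑ m, φ m (w m) = 0 → eval w F = 0 := by
  classical
  obtain ⟨Q, hQv, hQ⟩ := exists_retraction hv hl
  have hψv : ∀ᶠ w in 𝓝 v, ψ (φ l (w l)) = w l := ((continuous_apply l).tendsto v).eventually hψ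
  filter_upwards [hQ, hψv, hQv.eventually (hsum.and hψv)]
    with w ⟨_, hQF, hQm, _⟩ hw ⟨hQsum, hQl⟩ hw0
  have hoff : ∑ m ∈ Finset.univ.erase l, φ m (Q w m) = ∑ m ∈ Finset.univ.erase l, φ m (w m) :=
    Finset.sum_congr rfl fun m hm => by rw [hQm m (Finset.ne_of_mem_erase hm)]
  have hφl : φ l (Q w l) = φ l (w l) := by
    have hsums := (hQsum hQF).trans hw0.symm
    rwa [← Finset.add_sum_erase _ _ (Finset.mem_univ l),
      ← Finset.add_sum_erase _ _ (Finset.mem_univ l), hoff, add_left_inj] at hsums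
  have hQw : Q w = w := by
    ext m
    obtain rfl | hm := eq_or_ne m l
    · rw [← hQl, hφl, hw]
    · exact hQm m hm
  rwa [hQw] at hQF

theorem exists_local_sum_form {F : MvPolynomial ι ℂ} {v : ι → ℂ} (hcard : 3 < Fintype.card ι)
    (hv : eval v F = 0) (hd : ∀ i, eval v (pderiv i F) ≠ 0)
    (hobs : ∀ i j k l, [i, j, k, l].Nodup → F ∣ splittingObstruction i j k l F) :
    ∃ φ ψ : ι → ℂ → ℂ, (∀ m, ∀ᶠ z in 𝓝 (v m),
        AnalyticAt ℂ (φ m) z ∧ AnalyticAt ℂ (ψ m) (φ m z) ∧ ψ m (φ m z) = z) ∧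
      ∀ᶠ w in 𝓝 v, eval w F = 0 ↔ ∑ m, φ m (w m) = 0 := by
  obtain ⟨α, hα, hα0, hαF⟩ := exists_separated_gradient hcard hv hd hobs
  choose φ ψ hφv hφ hψ using fun m => exists_primitive_with_left_inverse (hα m) (hα0 m)
  obtain ⟨l⟩ : Nonempty ι := Fintype.card_pos_iff.1 (by omega)
  have hsum := eventually_sum_primitive_eq_zero hv (hd l) hφv hφ
    (hαF.mono fun w hw hwF m => hw hwF l m)
  refine ⟨φ, ψ, hψ, ?_⟩
  filter_upwards [hsum, eventually_eval_eq_zero_of_sum_eq_zero hv (hd l)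
    ((hψ l).mono fun z hz => hz.2.2) hsum] with w hw hw'
  exact ⟨hw, hw'⟩

theorem specialSumForm_of_dvd_splittingObstruction {F : MvPolynomial (Fin 4) ℂ}
    (hF : Irreducible F) (hd : ∀ i, pderiv i F ≠ 0)
    (hobs : ∀ i j k l, [i, j, k, l].Nodup → F ∣ splittingObstruction i j k l F) :
    SpecialSumForm F := by
  refine ⟨zeroSetOf {F, ∏ i, pderiv i F}, ⟨_, rfl⟩, fun v hv => hv F (by simp),
    algDimLE_zeroSetOf_prod_pderiv hF hd, fun v hv hvZ => ?_⟩
  have hdv : ∀ i, eval v (pderiv i F) ≠ 0 := by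
    have hprod : ¬(eval v F = 0 ∧ eval v (∏ i, pderiv i F) = 0) := by
      simpa [zeroSetOf] using hvZ
    simpa [hv, map_prod, Finset.prod_eq_zero_iff] using hprod
  obtain ⟨φ, ψ, hφ, hsum⟩ := exists_local_sum_form (by simp) hv hdv hobs
  obtain ⟨ε, hε, hball⟩ := Metric.eventually_nhds_iff_ball.1 (hsum.and
    (Filter.eventually_all.2 fun m => ((continuous_apply m).tendsto v).eventually (hφ m)))
  have hφball (m : Fin 4) (z : ℂ) (hz : z ∈ Metric.ball (v m) ε) :
      AnalyticAt ℂ (φ m) z ∧ AnalyticAt ℂ (ψ m) (φ m z) ∧ ψ m (φ m z) = z := by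
    have hupd : Function.update v m z ∈ Metric.ball v ε := by
      refine (dist_pi_lt_iff hε).2 fun i => ?_
      obtain rfl | hi := eq_or_ne i m
      · simpa using hz
      · simpa [hi] using hε
    simpa using (hball _ hupd).2 m
  refine ⟨fun m => Metric.ball (v m) ε, φ, ψ, fun m => ⟨Metric.isOpen_ball,
    Metric.mem_ball_self hε, Set.LeftInvOn.injOn fun z hz => (hφball m z hz).2.2, hφball m⟩,
    fun x y s t hx hy hs ht => ?_⟩
  have hmem : ![x, y, s, t] ∈ Metric.ball v ε := (dist_pi_lt_iff hε).2 <| by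
    simpa [Fin.forall_fin_succ] using ⟨hx, hy, hs, ht⟩
  simpa [Fin.sum_univ_four] using (hball _ hmem).1

end SumForm

/-- **Proposition 2.7 (key proposition).** Either `F` has the special sum form, or for one of
the three coordinate splits, represented by the permutations `id`, `swap x s`, `swap x t`
of the variables, both properties (a) and (b) hold, with an absolute constant in the
`O(δ⁴)` bounds. -/
theorem key_proposition :
    ∃ c : ℝ, 0 < c ∧ ∀ (δ : ℕ) (F : MvPolynomial (Fin 4) ℂ),
      Irreducible F → F.totalDegree = δ → (∀ i : Fin 4, pderiv i F ≠ 0) →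
      SpecialSumForm F ∨
      ∃ σ : Equiv.Perm (Fin 4),
        σ ∈ ({Equiv.refl (Fin 4), Equiv.swap 0 2, Equiv.swap 0 3} : Set (Equiv.Perm (Fin 4))) ∧
        GoodSplit c δ (rename σ F) := by
  refine ⟨13, by norm_num, ?_⟩
  rintro _ F hF rfl hd
  refine or_iff_not_imp_right.2 fun hgood => ?_
  have hobs {σ : Equiv.Perm (Fin 4)} (hσ : Function.Involutive σ)
      (hmem : σ ∈ ({.refl _, .swap 0 2, .swap 0 3} : Set (Equiv.Perm (Fin 4)))) :
      F ∣ splittingObstruction (σ 0) (σ 1) (σ 2) (σ 3) F := by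
    by_contra h
    exact hgood ⟨σ, hmem, goodSplit_rename_of_not_dvd_splittingObstruction hF hd hσ h⟩
  exact specialSumForm_of_dvd_splittingObstruction hF hd <| forall_dvd_splittingObstruction
    (hobs (σ := .refl _) (fun _ => rfl) (by simp))
    (hobs (σ := .swap 0 2) (Equiv.swap_apply_self 0 2) (by simp))
    (hobs (σ := .swap 0 3) (Equiv.swap_apply_self 0 3) (by simp))
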